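/- Let G be a simple planar graph whose vertex set is partitioned into T ∪ W such that W is a stable (independent) set and every vertex of G has degree at least 3. Then there exists a vertex t ∈ T of degree at most 10 that has at most 5 neighbors in T. -/

import Mathlib

open SimpleGraph
/-- `G` has `H` as a minor: there are nonempty, pairwise-disjoint, connected branch sets,
one for each vertex of `H`, with an edge of `G` between the branch sets of any two
adjacent vertices of `H`. -/
def HasMinor {V : Type*} {W : Type*} (G : SimpleGraph V) (H : SimpleGraph W) : Prop :=
  ∃ f : W → Set V,
    (∀ w, (f w).Nonempty) ∧
    (∀ w, (G.induce (f w)).Connected) ∧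
    (∀ w₁ w₂, w₁ ≠ w₂ → Disjoint (f w₁) (f w₂)) ∧
    (∀ w₁ w₂, H.Adj w₁ w₂ → ∃ a ∈ f w₁, ∃ b ∈ f w₂, G.Adj a b)

/-- Planarity, via Wagner's theorem: a graph is planar iff it has neither a `K₅` minor
nor a `K₃,₃` minor. -/
def IsPlanar {V : Type*} (G : SimpleGraph V) : Prop :=
  ¬ HasMinor G (completeGraph (Fin 5)) ∧
  ¬ HasMinor G (completeBipartiteGraph (Fin 3) (Fin 3))

set_option linter.unusedSectionVars false

section PlanarCert

variable {V : Type*} [DecidableEq V]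

/-- cut-style connectivity of a finset -/
def CS (G : SimpleGraph V) (A : Finset V) : Prop :=
  A.Nonempty ∧ ∀ B : Finset V, B ⊆ A → B.Nonempty →
    (∀ u ∈ B, ∀ v ∈ A, G.Adj u v → v ∈ B) → A ⊆ B

theorem CS_singleton (G : SimpleGraph V) (a : V) : CS G {a} := by
  refine ⟨⟨a, by simp⟩, fun B hB hne _ => ?_⟩
  obtain ⟨b, hb⟩ := hne
  have := hB hb
  simp only [Finset.mem_singleton] at this
  subst this
  simpa using hb

theorem CS_union {G : SimpleGraph V} {A B : Finset V} (hA : CS G A) (hB : CS G B)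
    (h : ∃ a ∈ A, ∃ b ∈ B, G.Adj a b) : CS G (A ∪ B) := by
  obtain ⟨a, ha, b, hb, hab⟩ := h
  refine ⟨⟨a, by simp [ha]⟩, fun C hC hne hcl => ?_⟩
  have key : ∀ D : Finset V, CS G D → D ⊆ A ∪ B → (∃ d ∈ D, d ∈ C) → D ⊆ C := by
    intro D hD hDs ⟨d, hd, hdC⟩
    have := hD.2 (D ∩ C) Finset.inter_subset_left ⟨d, by simp [hd, hdC]⟩ (by
      intro u hu v hv huv
      simp only [Finset.mem_inter] at hu ⊢
      exact ⟨hv, hcl u hu.2 v (hDs hv) huv⟩)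
    exact this.trans Finset.inter_subset_right
  obtain ⟨c, hc⟩ := hne
  have hcAB := hC hc
  rw [Finset.mem_union] at hcAB
  have hA' : A ⊆ A ∪ B := Finset.subset_union_left
  have hB' : B ⊆ A ∪ B := Finset.subset_union_right
  rcases hcAB with h1 | h1
  · have hAC := key A hA hA' ⟨c, h1, hc⟩
    have hbC := hcl a (hAC ha) b (hB' hb) hab
    exact Finset.union_subset hAC (key B hB hB' ⟨b, hb, hbC⟩)
  · have hBC := key B hB hB' ⟨c, h1, hc⟩
    have haC := hcl b (hBC hb) a (hA' ha) hab.symm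
    exact Finset.union_subset (key A hA hA' ⟨a, ha, haC⟩) hBC

theorem CS_insert {G : SimpleGraph V} {A : Finset V} {v : V} (hA : CS G A)
    (h : ∃ a ∈ A, G.Adj v a) : CS G (insert v A) := by
  have := CS_union (CS_singleton G v) hA (by simpa using h)
  rwa [Finset.insert_eq]

theorem CS_congr {G H : SimpleGraph V} {A : Finset V}
    (h : ∀ u ∈ A, ∀ v ∈ A, G.Adj u v ↔ H.Adj u v) (hA : CS G A) : CS H A := by
  refine ⟨hA.1, fun B hB hne hcl => hA.2 B hB hne fun u hu v hv huv => ?_⟩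
  exact hcl u hu v hv ((h u (hB hu) v hv).1 huv)

theorem CS_connected {G : SimpleGraph V} {A : Finset V} (hA : CS G A) :
    (G.induce (A : Set V)).Connected := by
  classical
  obtain ⟨a, ha⟩ := hA.1
  rw [SimpleGraph.connected_iff_exists_forall_reachable]
  refine ⟨⟨a, ha⟩, ?_⟩
  let B : Finset V := A.filter fun v => ∃ h : v ∈ (A : Set V),
    (G.induce (A : Set V)).Reachable ⟨a, ha⟩ ⟨v, h⟩
  have hAB : A ⊆ B := by
    refine hA.2 B (Finset.filter_subset _ _) ⟨a, ?_⟩ ?_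
    · simp only [B, Finset.mem_filter]
      exact ⟨ha, ha, SimpleGraph.Reachable.refl _⟩
    · intro u hu v hv huv
      simp only [B, Finset.mem_filter] at hu ⊢
      obtain ⟨_, hu1, hu2⟩ := hu
      refine ⟨hv, hv, hu2.trans (SimpleGraph.Adj.reachable ?_)⟩
      simpa using huv
  rintro ⟨v, hv⟩
  have := hAB hv
  simp only [B, Finset.mem_filter] at this
  exact this.2.2

/-- minor with finite branch sets inside `S` -/
def HM {W : Type*} (G : SimpleGraph V) (S : Finset V) (H : SimpleGraph W) : Prop :=
  ∃ f : W → Finset V, (∀ w, f w ⊆ S) ∧ (∀ w, CS G (f w)) ∧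
    (∀ w₁ w₂, w₁ ≠ w₂ → Disjoint (f w₁) (f w₂)) ∧
    (∀ w₁ w₂, H.Adj w₁ w₂ → ∃ a ∈ f w₁, ∃ b ∈ f w₂, G.Adj a b)

theorem HM_hasMinor {W : Type*} {G : SimpleGraph V} {S : Finset V} {H : SimpleGraph W}
    (h : HM G S H) : HasMinor G H := by
  obtain ⟨f, -, h2, h3, h4⟩ := h
  refine ⟨fun w => (f w : Set V), fun w => ?_, fun w => CS_connected (h2 w), ?_, ?_⟩
  · exact_mod_cast (h2 w).1
  · intro a b hab
    exact Finset.disjoint_coe.2 (h3 a b hab)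
  · simpa using h4

/-- contraction of `y` into `x` (the vertex `y` is then to be ignored) -/
def ctr (G : SimpleGraph V) (x y : V) : SimpleGraph V where
  Adj u v := u ≠ v ∧ (G.Adj u v ∨ (u = x ∧ G.Adj y v) ∨ (v = x ∧ G.Adj y u))
  symm := ⟨by
    rintro u v ⟨h, h'⟩
    refine ⟨h.symm, ?_⟩
    rcases h' with h' | h' | h'
    · exact Or.inl h'.symm
    · exact Or.inr (Or.inr h')
    · exact Or.inr (Or.inl h')⟩
  loopless := ⟨by rintro u ⟨h, -⟩; exact h rfl⟩

theorem ctr_adj {G : SimpleGraph V} {x y u v : V} : (ctr G x y).Adj u v ↔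
    u ≠ v ∧ (G.Adj u v ∨ (u = x ∧ G.Adj y v) ∨ (v = x ∧ G.Adj y u)) := Iff.rfl

theorem CS_unctr {G : SimpleGraph V} {x y : V} {A : Finset V} (hxy : G.Adj x y)
    (hA : CS (ctr G x y) A) (hx : x ∈ A) (hy : y ∉ A) : CS G (insert y A) := by
  refine ⟨⟨y, by simp⟩, fun B hB hne hcl => ?_⟩
  have h1 : y ∈ B → x ∈ B := fun h => hcl y h x (by simp [hx]) hxy.symm
  have h2 : x ∈ B → y ∈ B := fun h => hcl x h y (by simp) hxy
  have hne' : x ≠ y := hxy.ne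
  have h3 : A ⊆ B.erase y := by
    refine hA.2 _ ?_ ?_ ?_
    · intro u hu
      rw [Finset.mem_erase] at hu
      have := hB hu.2
      rw [Finset.mem_insert] at this
      tauto
    · obtain ⟨b, hb⟩ := hne
      by_cases hby : b = y
      · subst hby
        exact ⟨x, by simp [hne', h1 hb]⟩
      · exact ⟨b, by simp [hby, hb]⟩
    · intro u hu v hv huv
      rw [Finset.mem_erase] at hu ⊢
      refine ⟨fun h => hy (h ▸ hv), ?_⟩
      rw [ctr_adj] at huv
      rcases huv.2 with h | ⟨rfl, h⟩ | ⟨rfl, h⟩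
      · exact hcl u hu.2 v (by simp [hv]) h
      · exact hcl y (h2 hu.2) v (by simp [hv]) h
      · exact h1 (hcl u hu.2 y (by simp) h.symm)
  have h4 : x ∈ B := Finset.mem_of_mem_erase (h3 hx)
  intro u hu
  rw [Finset.mem_insert] at hu
  rcases hu with rfl | hu
  · exact h2 h4
  · exact Finset.mem_of_mem_erase (h3 hu)

theorem HM_unctr {W : Type*} {G : SimpleGraph V} {x y : V} {S : Finset V} {H : SimpleGraph W}
    (hxy : G.Adj x y) (hx : x ∈ S) (hy : y ∈ S) (h : HM (ctr G x y) (S.erase y) H) :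
    HM G S H := by
  obtain ⟨f, h1, h2, h3, h4⟩ := h
  have hyf : ∀ w, y ∉ f w := fun w hw => by simpa using h1 w hw
  let g : W → Finset V := fun w => if x ∈ f w then insert y (f w) else f w
  have hfg : ∀ w, f w ⊆ g w := by
    intro w
    by_cases hw : x ∈ f w <;> simp [g, hw]
  have hg : ∀ w u, u ∈ g w → u ∈ f w ∨ (u = y ∧ x ∈ f w) := by
    intro w u hu
    by_cases hw : x ∈ f w
    · simp only [g, hw, if_true, Finset.mem_insert] at hu
      tauto
    · simp only [g, hw, if_false] at hu
      tauto
  have hg2 : ∀ w, x ∈ f w → y ∈ g w := by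
    intro w hw
    simp [g, hw]
  refine ⟨g, ?_, ?_, ?_, ?_⟩
  · intro w u hu
    rcases hg w u hu with hu | ⟨rfl, -⟩
    · exact Finset.mem_of_mem_erase (h1 w hu)
    · exact hy
  · intro w
    by_cases hw : x ∈ f w
    · simp only [g, hw, if_true]
      exact CS_unctr hxy (h2 w) hw (hyf w)
    · simp only [g, hw, if_false]
      refine CS_congr ?_ (h2 w)
      intro u hu v hv
      rw [ctr_adj]
      constructor
      · rintro ⟨_, h | ⟨rfl, _⟩ | ⟨rfl, _⟩⟩
        · exact h
        · exact absurd hu hw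
        · exact absurd hv hw
      · intro h
        exact ⟨h.ne, Or.inl h⟩
  · intro a b hab
    rw [Finset.disjoint_left]
    intro u hua hub
    have hd := Finset.disjoint_left.1 (h3 a b hab)
    rcases hg a u hua with h | ⟨rfl, h⟩ <;> rcases hg b u hub with h' | ⟨h'', h'⟩
    · exact hd h h'
    · subst h''; exact hyf _ h
    · exact hyf _ h'
    · exact hd h h'
  · intro a b hab
    obtain ⟨u, hu, v, hv, huv⟩ := h4 a b hab
    rw [ctr_adj] at huv
    rcases huv.2 with h | ⟨rfl, h⟩ | ⟨rfl, h⟩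
    · exact ⟨u, hfg _ hu, v, hfg _ hv, h⟩
    · exact ⟨y, hg2 _ hu, v, hfg _ hv, h⟩
    · exact ⟨u, hfg _ hu, y, hg2 _ hv, h.symm⟩

/-- cut-style 3-connectivity -/
def C3 (G : SimpleGraph V) (S : Finset V) : Prop :=
  4 ≤ S.card ∧ ∀ a ∈ S, ∀ b ∈ S, a ≠ b → ∀ C ⊆ S, C.Nonempty → a ∉ C → b ∉ C →
    (∀ u ∈ C, ∀ v ∈ S, G.Adj u v → v ∈ C ∨ v = a ∨ v = b) → ∀ v ∈ S, v ∈ C ∨ v = a ∨ v = b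

theorem C3_nbr {G : SimpleGraph V} {S : Finset V} (h : C3 G S) {v a b : V} (hv : v ∈ S)
    (ha : a ∈ S) (hb : b ∈ S) (hva : v ≠ a) (hvb : v ≠ b) (hab : a ≠ b) :
    ∃ c ∈ S, G.Adj v c ∧ c ≠ a ∧ c ≠ b := by
  by_contra hcon
  push Not at hcon
  have := h.2 a ha b hb hab {v} (by simpa using hv) (by simp) (by simpa using hva.symm)
    (by simpa using hvb.symm) (by
      intro u hu w hw huw
      simp only [Finset.mem_singleton] at hu
      subst hu
      by_cases hwa : w = a
      · exact Or.inr (Or.inl hwa)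
      · exact Or.inr (Or.inr (hcon w hw huw hwa)))
  have hS : S ⊆ {v, a, b} := by
    intro w hw
    have := this w hw
    simpa using this
  have h1 := Finset.card_le_card hS
  have h2 := h.1
  have h3 : ({v, a, b} : Finset V).card ≤ 3 := Finset.card_le_three
  omega

theorem C3_deg {G : SimpleGraph V} {S : Finset V} (h : C3 G S) {v : V} (hv : v ∈ S) :
    ∃ a ∈ S, ∃ b ∈ S, ∃ c ∈ S, a ≠ b ∧ a ≠ c ∧ b ≠ c ∧ G.Adj v a ∧ G.Adj v b ∧ G.Adj v c := by
  have h4 := h.1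
  have hc : 3 ≤ (S.erase v).card := by rw [Finset.card_erase_of_mem hv]; omega
  obtain ⟨T, hT, hTc⟩ := Finset.exists_subset_card_eq hc
  obtain ⟨p, q, r, hpq, hpr, hqr, rfl⟩ := Finset.card_eq_three.1 hTc
  have hp := hT (show p ∈ _ by simp)
  have hq := hT (show q ∈ _ by simp)
  have hr := hT (show r ∈ _ by simp)
  rw [Finset.mem_erase] at hp hq hr
  obtain ⟨a, ha, hva, -, -⟩ := C3_nbr h hv hp.2 hq.2 hp.1.symm hq.1.symm hpq
  obtain ⟨p', hp', hp'v, hp'a⟩ : ∃ p' ∈ S, v ≠ p' ∧ a ≠ p' := by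
    by_cases hap : a = p
    · exact ⟨q, hq.2, hq.1.symm, by rw [hap]; exact hpq⟩
    · exact ⟨p, hp.2, hp.1.symm, hap⟩
  obtain ⟨b, hb, hvb, hba, -⟩ := C3_nbr h hv ha hp' hva.ne hp'v hp'a
  obtain ⟨c, hc, hvc, hca, hcb⟩ := C3_nbr h hv ha hb hva.ne hvb.ne hba.symm
  exact ⟨a, ha, b, hb, c, hc, hba.symm, hca.symm, hcb.symm, hva, hvb, hvc⟩

/-- `C` is cut off by `{x,y,z}` where `xy` is an edge -/
def Sp (G : SimpleGraph V) (S : Finset V) (x y z : V) (C : Finset V) : Prop :=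
  x ∈ S ∧ y ∈ S ∧ z ∈ S ∧ G.Adj x y ∧ z ≠ x ∧ z ≠ y ∧ C ⊆ S ∧ C.Nonempty ∧ x ∉ C ∧ y ∉ C ∧ z ∉ C ∧
  (∀ u ∈ C, ∀ v ∈ S, G.Adj u v → v ∈ C ∨ v = x ∨ v = y ∨ v = z) ∧
  ∃ v ∈ S, v ∉ C ∧ v ≠ x ∧ v ≠ y ∧ v ≠ z

theorem Sp_of_not {G : SimpleGraph V} {S : Finset V} (h : C3 G S) (h5 : 5 ≤ S.card) {x y : V}
    (hx : x ∈ S) (hy : y ∈ S) (hxy : G.Adj x y) (hn : ¬ C3 (ctr G x y) (S.erase y)) :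
    ∃ z C, Sp G S x y z C := by
  have hxney : x ≠ y := hxy.ne
  have hc : 4 ≤ (S.erase y).card := by rw [Finset.card_erase_of_mem hy]; omega
  unfold C3 at hn
  push Not at hn
  obtain ⟨a, ha, b, hb, hab, C, hC, hne, haC, hbC, hcl, v, hv, hvC, hva, hvb⟩ := hn hc
  rw [Finset.mem_erase] at ha hb hv
  have hyC : y ∉ C := fun h => by simpa using hC h
  have hCS : C ⊆ S := hC.trans (Finset.erase_subset _ _)
  have hcl' : ∀ u ∈ C, ∀ w ∈ S, w ≠ y → G.Adj u w → w ∈ C ∨ w = a ∨ w = b := by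
    intro u hu w hw hwy huw
    exact hcl u hu w (by simp [hw, hwy]) (ctr_adj.2 ⟨huw.ne, Or.inl huw⟩)
  have main : ∀ b, b ∈ S → b ≠ y → x ≠ b → b ∉ C → x ∉ C → v ≠ x → v ≠ b →
      (∀ u ∈ C, ∀ w ∈ S, w ≠ y → G.Adj u w → w ∈ C ∨ w = x ∨ w = b) → Sp G S x y b C := by
    intro b hb hby hxb hbC hxC hvx hvb hcl
    refine ⟨hx, hy, hb, hxy, hxb.symm, hby, hCS, hne, hxC, hyC, hbC, ?_, v, hv.2, hvC, hvx, hv.1, hvb⟩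
    intro u hu w hw huw
    by_cases hwy : w = y
    · tauto
    · have := hcl u hu w hw hwy huw
      tauto
  by_cases hxa : x = a
  · subst hxa
    exact ⟨b, C, main b hb.2 hb.1 hab hbC haC hva hvb hcl'⟩
  by_cases hxb : x = b
  · subst hxb
    refine ⟨a, C, main a ha.2 ha.1 hxa haC hbC hvb hva ?_⟩
    intro u hu w hw hwy huw
    have := hcl' u hu w hw hwy huw
    tauto
  exfalso
  by_cases hxC : x ∈ C
  · have := h.2 a ha.2 b hb.2 hab (insert y C) (Finset.insert_subset hy hCS) (by simp)
      (by simp [haC, ha.1]) (by simp [hbC, hb.1]) (by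
        intro u hu w hw huw
        rw [Finset.mem_insert] at hu ⊢
        by_cases hwy : w = y
        · tauto
        rcases hu with rfl | hu
        · by_cases hwx : w = x
          · subst hwx; tauto
          · have := hcl x hxC w (by simp [hw, hwy])
              (ctr_adj.2 ⟨fun h => hwx h.symm, Or.inr (Or.inl ⟨rfl, huw⟩)⟩)
            tauto
        · have := hcl' u hu w hw hwy huw
          tauto) v hv.2
    simp only [Finset.mem_insert] at this
    tauto
  · have := h.2 a ha.2 b hb.2 hab C hCS hne haC hbC (by
        intro u hu w hw huw
        by_cases hwy : w = y
        · subst hwy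
          have := hcl u hu x (by simp [hx, hxney])
              (ctr_adj.2 ⟨fun h => hxC (h ▸ hu), Or.inr (Or.inr ⟨rfl, huw.symm⟩)⟩)
          tauto
        · exact hcl' u hu w hw hwy huw) v hv.2
    tauto

set_option maxHeartbeats 2000000 in
theorem exists_contractible {G : SimpleGraph V} {S : Finset V} (h : C3 G S) (h5 : 5 ≤ S.card) :
    ∃ x ∈ S, ∃ y ∈ S, G.Adj x y ∧ C3 (ctr G x y) (S.erase y) := by
  classical
  by_contra hcon
  push Not at hcon
  have hA : ∀ x ∈ S, ∀ y ∈ S, G.Adj x y → ∃ z C, Sp G S x y z C :=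
    fun x hx y hy hxy => Sp_of_not h h5 hx hy hxy (hcon x hx y hy hxy)
  have hmain : ∀ n : ℕ, ∀ x y z C, Sp G S x y z C → C.card = n → False := by
    intro n
    induction n using Nat.strong_induction_on with
    | _ n ih =>
    intro x y z C hsp hCn
    obtain ⟨hx, hy, hz, hxy, hzx, hzy, hCS, hne, hxC, hyC, hzC, hcl, v0, hv0, hv0C, h1, h2, h3⟩ := hsp
    -- neighbour of z in C
    obtain ⟨v, hvC, hzv⟩ : ∃ v ∈ C, G.Adj z v := by
      by_contra hno
      push Not at hno
      have := h.2 x hx y hy hxy.ne C hCS hne hxC hyC (by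
        intro u hu w hw huw
        have := hcl u hu w hw huw
        rcases this with h | h | h | h
        · tauto
        · tauto
        · tauto
        · subst h
          exact absurd huw.symm (hno u hu)) v0 hv0
      tauto
    have hvS := hCS hvC
    obtain ⟨w, D0, hD0⟩ := hA z hz v hvS hzv
    obtain ⟨D, hD, hxD, hyD⟩ : ∃ D, Sp G S z v w D ∧ x ∉ D ∧ y ∉ D := by
      by_cases hc : x ∉ D0 ∧ y ∉ D0
      · exact ⟨D0, hD0, hc⟩
      obtain ⟨-, -, hw, -, hwz, hwv, hDS, hDne, hzD, hvD, hwD, hDcl, d, hd, hdD, hdz, hdv, hdw⟩ := hD0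
      let D1 := S.filter fun u => u ∉ D0 ∧ u ≠ z ∧ u ≠ v ∧ u ≠ w
      have hD1 : ∀ u, u ∈ D1 ↔ u ∈ S ∧ u ∉ D0 ∧ u ≠ z ∧ u ≠ v ∧ u ≠ w := by
        intro u; simp [D1]
      have hnoadj : ∀ a ∈ D0, ∀ b ∈ D1, ¬ G.Adj a b := by
        intro a ha b hb hab
        rw [hD1] at hb
        have := hDcl a ha b hb.1 hab
        tauto
      refine ⟨D1, ⟨hz, hvS, hw, hzv, hwz, hwv, Finset.filter_subset _ _, ⟨d, ?_⟩, ?_, ?_, ?_, ?_, ?_⟩, ?_, ?_⟩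
      · rw [hD1]; tauto
      · rw [hD1]; tauto
      · rw [hD1]; tauto
      · rw [hD1]; tauto
      · intro a ha b hb hab
        have hbD : b ∉ D0 := fun hbD => hnoadj b hbD a ha hab.symm
        rw [hD1]
        tauto
      · obtain ⟨e, he⟩ := hDne
        refine ⟨e, hDS he, ?_, ?_, ?_, ?_⟩
        · rw [hD1]; tauto
        · rintro rfl; exact hzD he
        · rintro rfl; exact hvD he
        · rintro rfl; exact hwD he
      · intro hx1
        have hyD0 : y ∈ D0 := by
          have := (hD1 x).1 hx1
          tauto
        exact hnoadj y hyD0 x hx1 hxy.symm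
      · intro hy1
        have hxD0 : x ∈ D0 := by
          have := (hD1 y).1 hy1
          tauto
        exact hnoadj x hxD0 y hy1 hxy
    obtain ⟨-, -, hw, -, hwz, hwv, hDS, hDne, hzD, hvD, hwD, hDcl, d, hd, hdD, hdz, hdv, hdw⟩ := hD
    -- neighbour of v in D
    obtain ⟨u, huD, hvu⟩ : ∃ u ∈ D, G.Adj v u := by
      by_contra hno
      push Not at hno
      have := h.2 z hz w hw hwz.symm D hDS hDne hzD hwD (by
        intro a ha b hb hab
        have := hDcl a ha b hb hab
        rcases this with h | h | h | h
        · tauto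
        · tauto
        · subst h
          exact absurd hab.symm (hno a ha)
        · tauto) d hd
      tauto
    have huC : u ∈ C := by
      have := hcl v hvC u (hDS huD) hvu
      rcases this with h | h | h | h
      · exact h
      · exact absurd huD (h ▸ hxD)
      · exact absurd huD (h ▸ hyD)
      · exact absurd huD (h ▸ hzD)
    have hlt : (D ∩ C).card < n := by
      rw [← hCn]
      apply Finset.card_lt_card
      rw [Finset.ssubset_iff_of_subset Finset.inter_subset_right]
      exact ⟨v, hvC, by simp [hvD]⟩
    refine ih _ hlt z v w (D ∩ C) ⟨hz, hvS, hw, hzv, hwz, hwv, Finset.inter_subset_left.trans hDS,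
      ⟨u, by simp [huD, huC]⟩, by simp [hzD], by simp [hvD], by simp [hwD], ?_, d, hd, by simp [hdD], hdz, hdv, hdw⟩ rfl
    intro a ha b hb hab
    rw [Finset.mem_inter] at ha ⊢
    have e1 := hDcl a ha.1 b hb hab
    have e2 := hcl a ha.2 b hb hab
    rcases e2 with e2 | e2 | e2 | e2
    · tauto
    · subst e2; tauto
    · subst e2; tauto
    · tauto
  obtain ⟨x, hx⟩ : S.Nonempty := Finset.card_pos.1 (by omega)
  obtain ⟨y, hy, _, _, _, _, _, _, _, hxy, _⟩ := C3_deg h hx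
  obtain ⟨z, C, hC⟩ := hA x hx y hy hxy
  exact hmain _ x y z C hC rfl

/-- combinatorial planarity certificate: `F` is a family of faces (vertex sets) -/
structure Cert (G : SimpleGraph V) (S : Finset V) (F : Finset (Finset V)) : Prop where
  sub : ∀ Q ∈ F, Q ⊆ S
  deg : ∀ Q ∈ F, ∀ v ∈ Q, ∃ a ∈ Q, ∃ b ∈ Q, a ≠ b ∧ G.Adj v a ∧ G.Adj v b ∧
    ∀ c ∈ Q, G.Adj v c → c = a ∨ c = b
  edge : ∀ u ∈ S, ∀ v ∈ S, G.Adj u v → ∃ Q₁ ∈ F, ∃ Q₂ ∈ F, Q₁ ≠ Q₂ ∧ u ∈ Q₁ ∧ v ∈ Q₁ ∧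
    u ∈ Q₂ ∧ v ∈ Q₂ ∧ ∀ Q ∈ F, u ∈ Q → v ∈ Q → Q = Q₁ ∨ Q = Q₂
  nonedge : ∀ u v, u ≠ v → ¬ G.Adj u v → ∀ Q₁ ∈ F, ∀ Q₂ ∈ F, u ∈ Q₁ → v ∈ Q₁ →
    u ∈ Q₂ → v ∈ Q₂ → Q₁ = Q₂
  rot : ∀ v ∈ S, ∀ P : V → Prop, (∃ a ∈ S, G.Adj v a ∧ P a) → (∃ b ∈ S, G.Adj v b ∧ ¬ P b) →
    ∃ Q ∈ F, v ∈ Q ∧ (∃ a ∈ Q, G.Adj v a ∧ P a) ∧ (∃ b ∈ Q, G.Adj v b ∧ ¬ P b)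
  conn : ∀ Q ∈ F, ∀ u ∈ Q, ∀ v ∈ Q, G.Adj u v → CS G ((Q.erase u).erase v)
  count : ∑ Q ∈ F, Q.card + 4 ≤ 2 * S.card + 2 * F.card
  ne : ∀ Q ∈ F, Q.Nonempty

theorem CS_lift {G G' : SimpleGraph V} (π : V → V) {A A' : Finset V} (hA' : CS G' A')
    (hπ : ∀ a ∈ A, π a ∈ A') (hfib : ∀ a ∈ A, ∀ b ∈ A, π a = π b → a = b ∨ G.Adj a b)
    (hedge : ∀ a' ∈ A', ∀ b' ∈ A', G'.Adj a' b' → ∃ a ∈ A, ∃ b ∈ A, π a = a' ∧ π b = b' ∧ G.Adj a b)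
    (hsurj : ∀ a' ∈ A', ∃ a ∈ A, π a = a') : CS G A := by
  refine ⟨?_, fun B hB hne hcl => ?_⟩
  · obtain ⟨a', ha'⟩ := hA'.1
    obtain ⟨a, ha, -⟩ := hsurj a' ha'
    exact ⟨a, ha⟩
  have hf : ∀ a ∈ A, ∀ b ∈ B, π a = π b → a ∈ B := by
    intro a ha b hb hab
    rcases hfib a ha b (hB hb) hab with rfl | h
    · exact hb
    · exact hcl b hb a ha h.symm
  have := hA'.2 (B.image π) (by
    intro w hw
    obtain ⟨b, hb, rfl⟩ := Finset.mem_image.1 hw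
    exact hπ b (hB hb)) (hne.image π) (by
    intro u' hu' v' hv' huv
    obtain ⟨u, hu, rfl⟩ := Finset.mem_image.1 hu'
    obtain ⟨a, ha, b, hb, h1, rfl, h3⟩ := hedge _ (hπ u (hB hu)) v' hv' huv
    exact Finset.mem_image_of_mem _ (hcl a (hf a ha u hu h1) b hb h3))
  intro a ha
  obtain ⟨b, hb, hba⟩ := Finset.mem_image.1 (this (hπ a ha))
  exact hf a ha b hb hba.symm

/-- data for splitting the vertex `z` of `G'` into the edge `xy` of `G` -/
structure SD (G G' : SimpleGraph V) (U : Finset V) (F F' Bf : Finset (Finset V)) (Z : Finset V)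
    (x y z : V) (hx hy : Finset V → Prop) (φ : Finset V → Finset V) : Prop where
  xU : x ∉ U
  yU : y ∉ U
  zU : z ∉ U
  xy : G.Adj x y
  gU : ∀ u ∈ U, ∀ v ∈ U, G'.Adj u v ↔ G.Adj u v
  gz : ∀ u ∈ U, G'.Adj z u ↔ G.Adj x u ∨ G.Adj y u
  cF : Cert G' (insert z U) F
  P0 : ∀ Q ∈ F, z ∈ Q → hx Q ∨ hy Q
  P1 : ∀ u ∈ U, G.Adj x u → ¬ G.Adj y u → ∀ Q ∈ F, z ∈ Q → u ∈ Q → hx Q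
  P2 : ∀ u ∈ U, G.Adj y u → ¬ G.Adj x u → ∀ Q ∈ F, z ∈ Q → u ∈ Q → hy Q
  P3 : ∀ u ∈ U, G.Adj x u → G.Adj y u → ∃ Q₁ ∈ F, ∃ Q₂ ∈ F, z ∈ Q₁ ∧ u ∈ Q₁ ∧ z ∈ Q₂ ∧ u ∈ Q₂ ∧
    hx Q₁ ∧ ¬ hy Q₁ ∧ hy Q₂ ∧ ¬ hx Q₂
  P4 : ∀ Q ∈ F, z ∈ Q → ¬ hy Q → ∀ u ∈ Q, G'.Adj z u → G.Adj x u
  P5 : ∀ Q ∈ F, z ∈ Q → ¬ hx Q → ∀ u ∈ Q, G'.Adj z u → G.Adj y u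
  P6 : ∀ Q ∈ F, z ∈ Q → hx Q → hy Q → ∃ u ∈ Q, ∃ v ∈ Q, u ∈ U ∧ v ∈ U ∧ G.Adj x u ∧ ¬ G.Adj y u ∧
    G.Adj y v ∧ ¬ G.Adj x v
  P7 : Bf.card + Z.card = 2
  P8 : ∀ u ∈ U, G.Adj y u → ¬ G.Adj x u → ∀ Q₁ ∈ F, ∀ Q₂ ∈ F, z ∈ Q₁ → u ∈ Q₁ → z ∈ Q₂ → u ∈ Q₂ →
    hx Q₁ → hx Q₂ → Q₁ = Q₂
  P9 : ∀ u ∈ U, G.Adj x u → ¬ G.Adj y u → ∀ Q₁ ∈ F, ∀ Q₂ ∈ F, z ∈ Q₁ → u ∈ Q₁ → z ∈ Q₂ → u ∈ Q₂ →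
    hy Q₁ → hy Q₂ → Q₁ = Q₂
  NX : ∃ u ∈ U, G.Adj x u
  NY : ∃ u ∈ U, G.Adj y u
  hZ : ∀ u, u ∈ Z ↔ u ∈ U ∧ G.Adj x u ∧ G.Adj y u
  hB : ∀ Q, Q ∈ Bf ↔ Q ∈ F ∧ z ∈ Q ∧ hx Q ∧ hy Q
  φU : ∀ Q ∈ F, ∀ w ∈ U, w ∈ φ Q ↔ w ∈ Q
  φx : ∀ Q ∈ F, x ∈ φ Q ↔ z ∈ Q ∧ hx Q
  φy : ∀ Q ∈ F, y ∈ φ Q ↔ z ∈ Q ∧ hy Q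
  φs : ∀ Q ∈ F, ∀ w ∈ φ Q, w ∈ U ∨ w = x ∨ w = y
  hF' : ∀ R, R ∈ F' ↔ (∃ Q ∈ F, R = φ Q) ∨ (∃ u ∈ U, G.Adj x u ∧ G.Adj y u ∧ R = {x, y, u})

namespace SD

variable {G G' : SimpleGraph V} {U : Finset V} {F F' Bf : Finset (Finset V)} {Z : Finset V}
    {x y z : V} {hx hy : Finset V → Prop} {φ : Finset V → Finset V}

theorem swap (h : SD G G' U F F' Bf Z x y z hx hy φ) : SD G G' U F F' Bf Z y x z hy hx φ where
  xU := h.yU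
  yU := h.xU
  zU := h.zU
  xy := h.xy.symm
  gU := h.gU
  gz := fun u hu => (h.gz u hu).trans or_comm
  cF := h.cF
  P0 := fun Q hQ hz => (h.P0 Q hQ hz).symm
  P1 := h.P2
  P2 := h.P1
  P3 := by
    intro u hu h1 h2
    obtain ⟨Q1, hQ1, Q2, hQ2, e1, e2, e3, e4, e5, e6, e7, e8⟩ := h.P3 u hu h2 h1
    exact ⟨Q2, hQ2, Q1, hQ1, e3, e4, e1, e2, e7, e8, e5, e6⟩
  P4 := h.P5
  P5 := h.P4
  P6 := by
    intro Q hQ hz h1 h2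
    obtain ⟨u, hu, v, hv, e1, e2, e3, e4, e5, e6⟩ := h.P6 Q hQ hz h2 h1
    exact ⟨v, hv, u, hu, e2, e1, e5, e6, e3, e4⟩
  P7 := h.P7
  P8 := h.P9
  P9 := h.P8
  NX := h.NY
  NY := h.NX
  hZ := fun u => (h.hZ u).trans (by tauto)
  hB := fun u => (h.hB u).trans (by tauto)
  φU := h.φU
  φx := h.φy
  φy := h.φx
  φs := fun Q hQ w hw => by have := h.φs Q hQ w hw; tauto
  hF' := by
    intro R
    rw [h.hF']
    constructor
    · rintro (e | ⟨u, hu, h1, h2, rfl⟩)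
      · exact Or.inl e
      · exact Or.inr ⟨u, hu, h2, h1, by rw [Finset.insert_comm]⟩
    · rintro (e | ⟨u, hu, h1, h2, rfl⟩)
      · exact Or.inl e
      · exact Or.inr ⟨u, hu, h2, h1, by rw [Finset.insert_comm]⟩

variable (h : SD G G' U F F' Bf Z x y z hx hy φ)
include h

theorem memQ {Q : Finset V} (hQ : Q ∈ F) {w : V} (hw : w ∈ Q) : w = z ∨ w ∈ U := by
  have := h.cF.sub Q hQ hw
  simpa using this

/-- neighbours of `z` in a face of double type -/
theorem nb_both {Q : Finset V} (hQ : Q ∈ F) (hz : z ∈ Q) (h1 : hx Q) (h2 : hy Q) :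
    ∃ u ∈ Q, ∃ v ∈ Q, u ∈ U ∧ v ∈ U ∧ G.Adj x u ∧ ¬ G.Adj y u ∧ G.Adj y v ∧ ¬ G.Adj x v ∧
      ∀ w ∈ Q, G'.Adj z w → w = u ∨ w = v := by
  obtain ⟨u, hu, v, hv, e1, e2, e3, e4, e5, e6⟩ := h.P6 Q hQ hz h1 h2
  refine ⟨u, hu, v, hv, e1, e2, e3, e4, e5, e6, ?_⟩
  obtain ⟨a, ha, b, hb, hab, f1, f2, f3⟩ := h.cF.deg Q hQ z hz
  intro w hw hzw
  have g1 := f3 u hu ((h.gz u e1).2 (Or.inl e3))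
  have g2 := f3 v hv ((h.gz v e2).2 (Or.inr e5))
  have g3 := f3 w hw hzw
  have huv : u ≠ v := by rintro rfl; exact e4 e5
  grind

theorem inj {Q Q' : Finset V} (hQ : Q ∈ F) (hQ' : Q' ∈ F) (he : φ Q = φ Q') : Q = Q' := by
  have key : ∀ A ∈ F, ∀ B ∈ F, φ A = φ B → A ⊆ B := by
    intro A hA B hB e w hw
    rcases h.memQ hA hw with rfl | hwU
    · rcases h.P0 A hA hw with e1 | e1
      · have := (h.φx A hA).2 ⟨hw, e1⟩
        rw [e] at this
        exact ((h.φx B hB).1 this).1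
      · have := (h.φy A hA).2 ⟨hw, e1⟩
        rw [e] at this
        exact ((h.φy B hB).1 this).1
    · have := (h.φU A hA w hwU).2 hw
      rw [e] at this
      exact (h.φU B hB w hwU).1 this
  exact Finset.Subset.antisymm (key Q hQ Q' hQ' he) (key Q' hQ' Q hQ he.symm)

theorem deg_x {Q : Finset V} (hQ : Q ∈ F) (hxQ : x ∈ φ Q) : ∃ a ∈ φ Q, ∃ b ∈ φ Q, a ≠ b ∧
    G.Adj x a ∧ G.Adj x b ∧ ∀ c ∈ φ Q, G.Adj x c → c = a ∨ c = b := by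
  obtain ⟨hz, h1⟩ := (h.φx Q hQ).1 hxQ
  by_cases h2 : hy Q
  · obtain ⟨u, hu, v, hv, e1, e2, e3, e4, e5, e6, e7⟩ := h.nb_both hQ hz h1 h2
    refine ⟨y, (h.φy Q hQ).2 ⟨hz, h2⟩, u, (h.φU Q hQ u e1).2 hu, ?_, h.xy, e3, ?_⟩
    · rintro rfl; exact h.yU e1
    · intro c hc hxc
      rcases h.φs Q hQ c hc with hcU | rfl | rfl
      · right
        rcases e7 c ((h.φU Q hQ c hcU).1 hc) ((h.gz c hcU).2 (Or.inl hxc)) with rfl | rfl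
        · rfl
        · exact absurd hxc e6
      · exact absurd rfl hxc.ne
      · exact Or.inl rfl
  · obtain ⟨a, ha, b, hb, hab, f1, f2, f3⟩ := h.cF.deg Q hQ z hz
    have haU : a ∈ U := (h.memQ hQ ha).resolve_left f1.ne'
    have hbU : b ∈ U := (h.memQ hQ hb).resolve_left f2.ne'
    refine ⟨a, (h.φU Q hQ a haU).2 ha, b, (h.φU Q hQ b hbU).2 hb, hab, h.P4 Q hQ hz h2 a ha f1,
      h.P4 Q hQ hz h2 b hb f2, ?_⟩
    intro c hc hxc
    rcases h.φs Q hQ c hc with hcU | rfl | rfl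
    · exact f3 c ((h.φU Q hQ c hcU).1 hc) ((h.gz c hcU).2 (Or.inl hxc))
    · exact absurd rfl hxc.ne
    · exact absurd ((h.φy Q hQ).1 hc).2 h2

theorem deg_U {Q : Finset V} (hQ : Q ∈ F) {v : V} (hvU : v ∈ U) (hv : v ∈ Q) :
    ∃ a ∈ φ Q, ∃ b ∈ φ Q, a ≠ b ∧
    G.Adj v a ∧ G.Adj v b ∧ ∀ c ∈ φ Q, G.Adj v c → c = a ∨ c = b := by
  obtain ⟨a, ha, b, hb, hab, f1, f2, f3⟩ := h.cF.deg Q hQ v hv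
  by_cases hcase : z ∈ Q ∧ G'.Adj z v
  · obtain ⟨hz, hzv⟩ := hcase
    -- other neighbour
    obtain ⟨b', hb'U, hb', hvb', hun⟩ : ∃ b' ∈ U, b' ∈ Q ∧ G.Adj v b' ∧
        ∀ c ∈ Q, c ∈ U → G.Adj v c → c = b' := by
      rcases f3 z hz hzv.symm with rfl | rfl
      · have hbU : b ∈ U := (h.memQ hQ hb).resolve_left hab.symm
        refine ⟨b, hbU, hb, (h.gU v hvU b hbU).1 f2, ?_⟩
        intro c hc hcU hvc
        rcases f3 c hc ((h.gU v hvU c hcU).2 hvc) with rfl | rfl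
        · exact absurd hcU h.zU
        · rfl
      · have haU : a ∈ U := (h.memQ hQ ha).resolve_left hab
        refine ⟨a, haU, ha, (h.gU v hvU a haU).1 f1, ?_⟩
        intro c hc hcU hvc
        rcases f3 c hc ((h.gU v hvU c hcU).2 hvc) with rfl | rfl
        · rfl
        · exact absurd hcU h.zU
    -- exactly one of x, y
    have key : (x ∈ φ Q ∧ G.Adj v x ∧ ¬ (y ∈ φ Q ∧ G.Adj v y)) ∨
        (y ∈ φ Q ∧ G.Adj v y ∧ ¬ (x ∈ φ Q ∧ G.Adj v x)) := by
      rw [h.φx Q hQ, h.φy Q hQ]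
      by_cases h1 : hx Q
      · by_cases h2 : hy Q
        · obtain ⟨u, hu, w, hw, e1, e2, e3, e4, e5, e6, e7⟩ := h.nb_both hQ hz h1 h2
          rcases e7 v hv hzv with rfl | rfl
          · left; exact ⟨⟨hz, h1⟩, e3.symm, fun e => e4 e.2.symm⟩
          · right; exact ⟨⟨hz, h2⟩, e5.symm, fun e => e6 e.2.symm⟩
        · left; exact ⟨⟨hz, h1⟩, (h.P4 Q hQ hz h2 v hv hzv).symm, fun e => h2 e.1.2⟩
      · right
        have h2 : hy Q := (h.P0 Q hQ hz).resolve_left h1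
        exact ⟨⟨hz, h2⟩, (h.P5 Q hQ hz h1 v hv hzv).symm, fun e => h1 e.1.2⟩
    rcases key with ⟨k1, k2, k3⟩ | ⟨k1, k2, k3⟩
    · refine ⟨x, k1, b', (h.φU Q hQ b' hb'U).2 hb', ?_, k2, hvb', ?_⟩
      · rintro rfl; exact h.xU hb'U
      · intro c hc hvc
        rcases h.φs Q hQ c hc with hcU | rfl | rfl
        · exact Or.inr (hun c ((h.φU Q hQ c hcU).1 hc) hcU hvc)
        · exact Or.inl rfl
        · exact absurd ⟨hc, hvc⟩ k3
    · refine ⟨y, k1, b', (h.φU Q hQ b' hb'U).2 hb', ?_, k2, hvb', ?_⟩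
      · rintro rfl; exact h.yU hb'U
      · intro c hc hvc
        rcases h.φs Q hQ c hc with hcU | rfl | rfl
        · exact Or.inr (hun c ((h.φU Q hQ c hcU).1 hc) hcU hvc)
        · exact absurd ⟨hc, hvc⟩ k3
        · exact Or.inl rfl
  · have hne : ∀ w ∈ Q, G'.Adj v w → w ∈ U := by
      intro w hw hvw
      refine (h.memQ hQ hw).resolve_left ?_
      rintro rfl
      exact hcase ⟨hw, hvw.symm⟩
    have haU := hne a ha f1
    have hbU := hne b hb f2
    refine ⟨a, (h.φU Q hQ a haU).2 ha, b, (h.φU Q hQ b hbU).2 hb, hab, (h.gU v hvU a haU).1 f1,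
      (h.gU v hvU b hbU).1 f2, ?_⟩
    intro c hc hvc
    rcases h.φs Q hQ c hc with hcU | rfl | rfl
    · exact f3 c ((h.φU Q hQ c hcU).1 hc) ((h.gU v hvU c hcU).2 hvc)
    · exact absurd ⟨((h.φx Q hQ).1 hc).1, (h.gz v hvU).2 (Or.inl hvc.symm)⟩ hcase
    · exact absurd ⟨((h.φy Q hQ).1 hc).1, (h.gz v hvU).2 (Or.inr hvc.symm)⟩ hcase

theorem deg' : ∀ Q ∈ F', ∀ v ∈ Q, ∃ a ∈ Q, ∃ b ∈ Q, a ≠ b ∧ G.Adj v a ∧ G.Adj v b ∧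
    ∀ c ∈ Q, G.Adj v c → c = a ∨ c = b := by
  intro R hR v hv
  rcases (h.hF' R).1 hR with ⟨Q, hQ, rfl⟩ | ⟨u, hu, h1, h2, rfl⟩
  · rcases h.φs Q hQ v hv with hvU | rfl | rfl
    · exact h.deg_U hQ hvU ((h.φU Q hQ v hvU).1 hv)
    · exact h.deg_x hQ hv
    · exact h.swap.deg_x hQ hv
  · have hxy := h.xy
    have n1 := h1.ne
    have n2 := h2.ne
    have n3 := hxy.ne
    simp only [Finset.mem_insert, Finset.mem_singleton] at hv
    rcases hv with rfl | rfl | rfl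
    · exact ⟨y, by simp, u, by simp, n2, hxy, h1, by
        intro c hc hvc
        simp only [Finset.mem_insert, Finset.mem_singleton] at hc
        rcases hc with rfl | hc
        · exact absurd rfl hvc.ne
        · exact hc⟩
    · exact ⟨x, by simp, u, by simp, n1, hxy.symm, h2, by
        intro c hc hvc
        simp only [Finset.mem_insert, Finset.mem_singleton] at hc
        have := hvc.ne
        tauto⟩
    · exact ⟨x, by simp, y, by simp, n3, h1.symm, h2.symm, by
        intro c hc hvc
        simp only [Finset.mem_insert, Finset.mem_singleton] at hc
        have := hvc.ne
        tauto⟩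

omit h
end SD
namespace SD

variable {G G' : SimpleGraph V} {U : Finset V} {F F' Bf : Finset (Finset V)} {Z : Finset V}
    {x y z : V} {hx hy : Finset V → Prop} {φ : Finset V → Finset V}

variable (h : SD G G' U F F' Bf Z x y z hx hy φ)
include h

theorem sub' : ∀ R ∈ F', R ⊆ insert x (insert y U) := by
  intro R hR w hw
  simp only [Finset.mem_insert]
  rcases (h.hF' R).1 hR with ⟨Q, hQ, rfl⟩ | ⟨u, hu, h1, h2, rfl⟩
  · have := h.φs Q hQ w hw
    tauto
  · simp only [Finset.mem_insert, Finset.mem_singleton] at hw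
    rcases hw with rfl | rfl | rfl <;> simp [hu]

theorem memF {Q : Finset V} (hQ : Q ∈ F) : φ Q ∈ F' := (h.hF' _).2 (Or.inl ⟨Q, hQ, rfl⟩)

theorem memT {u : V} (hu : u ∈ U) (h1 : G.Adj x u) (h2 : G.Adj y u) : ({x, y, u} : Finset V) ∈ F' :=
  (h.hF' _).2 (Or.inr ⟨u, hu, h1, h2, rfl⟩)

theorem memTU {u w : V} (hw : w ∈ U) (hm : w ∈ ({x, y, u} : Finset V)) : w = u := by
  simp only [Finset.mem_insert, Finset.mem_singleton] at hm
  rcases hm with rfl | rfl | rfl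
  · exact absurd hw h.xU
  · exact absurd hw h.yU
  · rfl

theorem edge_UU {u v : V} (hu : u ∈ U) (hv : v ∈ U) (huv : G.Adj u v) :
    ∃ Q₁ ∈ F', ∃ Q₂ ∈ F', Q₁ ≠ Q₂ ∧ u ∈ Q₁ ∧ v ∈ Q₁ ∧
    u ∈ Q₂ ∧ v ∈ Q₂ ∧ ∀ Q ∈ F', u ∈ Q → v ∈ Q → Q = Q₁ ∨ Q = Q₂ := by
  obtain ⟨Q1, hQ1, Q2, hQ2, e1, e2, e3, e4, e5, e6⟩ := h.cF.edge u (by simp [hu]) v (by simp [hv])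
    ((h.gU u hu v hv).2 huv)
  refine ⟨φ Q1, h.memF hQ1, φ Q2, h.memF hQ2, fun e => e1 (h.inj hQ1 hQ2 e), ?_, ?_, ?_, ?_, ?_⟩
  · rwa [h.φU _ hQ1 _ hu]
  · rwa [h.φU _ hQ1 _ hv]
  · rwa [h.φU _ hQ2 _ hu]
  · rwa [h.φU _ hQ2 _ hv]
  intro R hR huR hvR
  rcases (h.hF' R).1 hR with ⟨Q, hQ, rfl⟩ | ⟨w, hw, h1, h2, rfl⟩
  · rw [h.φU _ hQ _ hu] at huR
    rw [h.φU _ hQ _ hv] at hvR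
    rcases e6 Q hQ huR hvR with rfl | rfl
    · exact Or.inl rfl
    · exact Or.inr rfl
  · exact absurd ((h.memTU hu huR).trans (h.memTU hv hvR).symm) huv.ne

theorem edge_xU {u : V} (hu : u ∈ U) (hxu : G.Adj x u) :
    ∃ Q₁ ∈ F', ∃ Q₂ ∈ F', Q₁ ≠ Q₂ ∧ x ∈ Q₁ ∧ u ∈ Q₁ ∧
    x ∈ Q₂ ∧ u ∈ Q₂ ∧ ∀ Q ∈ F', x ∈ Q → u ∈ Q → Q = Q₁ ∨ Q = Q₂ := by
  obtain ⟨Q1, hQ1, Q2, hQ2, e1, e2, e3, e4, e5, e6⟩ := h.cF.edge z (by simp) u (by simp [hu])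
    ((h.gz u hu).2 (Or.inl hxu))
  by_cases hyu : G.Adj y u
  · obtain ⟨A, hA, B, hB, f1, f2, f3, f4, f5, f6, f7, f8⟩ := h.P3 u hu hxu hyu
    refine ⟨φ A, h.memF hA, {x, y, u}, h.memT hu hxu hyu, ?_, ?_, ?_, by simp, by simp, ?_⟩
    · intro e
      have : y ∈ φ A := by rw [e]; simp
      exact f6 ((h.φy A hA).1 this).2
    · exact (h.φx A hA).2 ⟨f1, f5⟩
    · exact (h.φU A hA u hu).2 f2
    · intro R hR hxR huR
      rcases (h.hF' R).1 hR with ⟨Q, hQ, rfl⟩ | ⟨w, hw, h1, h2, rfl⟩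
      · left
        rw [h.φU _ hQ _ hu] at huR
        rw [h.φx _ hQ] at hxR
        have g1 := e6 A hA f1 f2
        have g2 := e6 B hB f3 f4
        have g3 := e6 Q hQ hxR.1 huR
        have g4 : A ≠ B := by rintro rfl; exact f8 f5
        have g5 : Q ≠ B := by rintro rfl; exact f8 hxR.2
        congr 1
        grind
      · rw [h.memTU hu huR]; exact Or.inr rfl
  · refine ⟨φ Q1, h.memF hQ1, φ Q2, h.memF hQ2, fun e => e1 (h.inj hQ1 hQ2 e), ?_, ?_, ?_, ?_, ?_⟩
    · exact (h.φx _ hQ1).2 ⟨e2, h.P1 u hu hxu hyu Q1 hQ1 e2 e3⟩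
    · exact (h.φU _ hQ1 u hu).2 e3
    · exact (h.φx _ hQ2).2 ⟨e4, h.P1 u hu hxu hyu Q2 hQ2 e4 e5⟩
    · exact (h.φU _ hQ2 u hu).2 e5
    intro R hR hxR huR
    rcases (h.hF' R).1 hR with ⟨Q, hQ, rfl⟩ | ⟨w, hw, h1, h2, rfl⟩
    · rw [h.φU _ hQ _ hu] at huR
      rw [h.φx _ hQ] at hxR
      rcases e6 Q hQ hxR.1 huR with rfl | rfl
      · exact Or.inl rfl
      · exact Or.inr rfl
    · obtain rfl := h.memTU hu huR
      exact absurd h2 hyu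

theorem tri_inj {u v : V} (hu : u ∈ U) (hv : v ∈ U)
    (e : ({x, y, u} : Finset V) = {x, y, v}) : u = v := by
  have : u ∈ ({x, y, v} : Finset V) := by rw [← e]; simp
  exact h.memTU hu this

theorem tri_ne {u : V} (hu : u ∈ U) (h1 : G.Adj x u) (h2 : G.Adj y u) {Q : Finset V} (hQ : Q ∈ F)
    (e : φ Q = {x, y, u}) : False := by
  have a1 : x ∈ φ Q := by rw [e]; simp
  have a2 : y ∈ φ Q := by rw [e]; simp
  have a3 : u ∈ φ Q := by rw [e]; simp
  rw [h.φx Q hQ] at a1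
  rw [h.φy Q hQ] at a2
  rw [h.φU Q hQ u hu] at a3
  obtain ⟨p, hp, q, hq, e1, e2, e3, e4, e5, e6, e7⟩ := h.nb_both hQ a1.1 a1.2 a2.2
  rcases e7 u a3 ((h.gz u hu).2 (Or.inl h1)) with rfl | rfl
  · exact e4 h2
  · exact e6 h1

theorem edge_xy : ∃ Q₁ ∈ F', ∃ Q₂ ∈ F', Q₁ ≠ Q₂ ∧ x ∈ Q₁ ∧ y ∈ Q₁ ∧
    x ∈ Q₂ ∧ y ∈ Q₂ ∧ ∀ Q ∈ F', x ∈ Q → y ∈ Q → Q = Q₁ ∨ Q = Q₂ := by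
  have hL : ∀ R, R ∈ Bf.image φ ∪ Z.image (fun u => ({x, y, u} : Finset V)) ↔
      R ∈ F' ∧ x ∈ R ∧ y ∈ R := by
    intro R
    simp only [Finset.mem_union, Finset.mem_image, h.hF', h.hB, h.hZ]
    constructor
    · rintro (⟨Q, ⟨hQ, a, b, c⟩, rfl⟩ | ⟨u, ⟨hu, a, b⟩, rfl⟩)
      · exact ⟨Or.inl ⟨Q, hQ, rfl⟩, (h.φx Q hQ).2 ⟨a, b⟩, (h.φy Q hQ).2 ⟨a, c⟩⟩
      · exact ⟨Or.inr ⟨u, hu, a, b, rfl⟩, by simp, by simp⟩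
    · rintro ⟨⟨Q, hQ, rfl⟩ | ⟨u, hu, a, b, rfl⟩, c, d⟩
      · rw [h.φx Q hQ] at c
        rw [h.φy Q hQ] at d
        exact Or.inl ⟨Q, ⟨hQ, c.1, c.2, d.2⟩, rfl⟩
      · exact Or.inr ⟨u, ⟨hu, a, b⟩, rfl⟩
  have hc : (Bf.image φ ∪ Z.image (fun u => ({x, y, u} : Finset V))).card = 2 := by
    rw [Finset.card_union_of_disjoint, Finset.card_image_of_injOn, Finset.card_image_of_injOn, h.P7]
    · intro u hu v hv e
      simp only [Finset.mem_coe, h.hZ] at hu hv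
      exact h.tri_inj hu.1 hv.1 e
    · intro u hu v hv e
      simp only [Finset.mem_coe, h.hB] at hu hv
      exact h.inj hu.1 hv.1 e
    · rw [Finset.disjoint_left]
      intro R h1 h2
      simp only [Finset.mem_image, h.hB, h.hZ] at h1 h2
      obtain ⟨Q, ⟨hQ, -⟩, rfl⟩ := h1
      obtain ⟨u, ⟨hu, a, b⟩, e⟩ := h2
      exact h.tri_ne hu a b hQ e.symm
  obtain ⟨R1, R2, hne, e⟩ := Finset.card_eq_two.1 hc
  rw [e] at hL
  have g1 := (hL R1).1 (by simp)
  have g2 := (hL R2).1 (by simp)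
  refine ⟨R1, g1.1, R2, g2.1, hne, g1.2.1, g1.2.2, g2.2.1, g2.2.2, ?_⟩
  intro Q hQ a b
  simpa using (hL Q).2 ⟨hQ, a, b⟩

theorem edge' : ∀ u ∈ insert x (insert y U), ∀ v ∈ insert x (insert y U), G.Adj u v →
    ∃ Q₁ ∈ F', ∃ Q₂ ∈ F', Q₁ ≠ Q₂ ∧ u ∈ Q₁ ∧ v ∈ Q₁ ∧
    u ∈ Q₂ ∧ v ∈ Q₂ ∧ ∀ Q ∈ F', u ∈ Q → v ∈ Q → Q = Q₁ ∨ Q = Q₂ := by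
  have sym : ∀ u v, (∃ Q₁ ∈ F', ∃ Q₂ ∈ F', Q₁ ≠ Q₂ ∧ u ∈ Q₁ ∧ v ∈ Q₁ ∧
    u ∈ Q₂ ∧ v ∈ Q₂ ∧ ∀ Q ∈ F', u ∈ Q → v ∈ Q → Q = Q₁ ∨ Q = Q₂) →
    (∃ Q₁ ∈ F', ∃ Q₂ ∈ F', Q₁ ≠ Q₂ ∧ v ∈ Q₁ ∧ u ∈ Q₁ ∧
    v ∈ Q₂ ∧ u ∈ Q₂ ∧ ∀ Q ∈ F', v ∈ Q → u ∈ Q → Q = Q₁ ∨ Q = Q₂) := by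
    rintro u v ⟨Q1, hQ1, Q2, hQ2, e1, e2, e3, e4, e5, e6⟩
    exact ⟨Q1, hQ1, Q2, hQ2, e1, e3, e2, e5, e4, fun Q hQ a b => e6 Q hQ b a⟩
  intro u hu v hv huv
  simp only [Finset.mem_insert] at hu hv
  rcases hu with rfl | rfl | hu <;> rcases hv with rfl | rfl | hv
  · exact absurd rfl huv.ne
  · exact h.edge_xy
  · exact h.edge_xU hv huv
  · exact sym _ _ h.edge_xy
  · exact absurd rfl huv.ne
  · exact h.swap.edge_xU hv huv
  · exact sym _ _ (h.edge_xU hu huv.symm)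
  · exact sym _ _ (h.swap.edge_xU hu huv.symm)
  · exact h.edge_UU hu hv huv

theorem nonedge_xU {u : V} (hu : u ∈ U) (hxu : ¬ G.Adj x u) : ∀ Q₁ ∈ F', ∀ Q₂ ∈ F', x ∈ Q₁ →
    u ∈ Q₁ → x ∈ Q₂ → u ∈ Q₂ → Q₁ = Q₂ := by
  have key : ∀ R ∈ F', x ∈ R → u ∈ R → ∃ Q ∈ F, R = φ Q ∧ z ∈ Q ∧ hx Q ∧ u ∈ Q := by
    intro R hR hxR huR
    rcases (h.hF' R).1 hR with ⟨Q, hQ, rfl⟩ | ⟨w, hw, h1, h2, rfl⟩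
    · rw [h.φU _ hQ _ hu] at huR
      rw [h.φx _ hQ] at hxR
      exact ⟨Q, hQ, rfl, hxR.1, hxR.2, huR⟩
    · obtain rfl := h.memTU hu huR
      exact absurd h1 hxu
  intro R1 hR1 R2 hR2 a b c d
  obtain ⟨Q1, hQ1, rfl, e1, e2, e3⟩ := key R1 hR1 a b
  obtain ⟨Q2, hQ2, rfl, f1, f2, f3⟩ := key R2 hR2 c d
  congr 1
  by_cases hyu : G.Adj y u
  · exact h.P8 u hu hyu hxu Q1 hQ1 Q2 hQ2 e1 e3 f1 f3 e2 f2
  · refine h.cF.nonedge z u ?_ ?_ Q1 hQ1 Q2 hQ2 e1 e3 f1 f3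
    · rintro rfl; exact h.zU hu
    · rw [h.gz u hu]; tauto

theorem nonedge' : ∀ u v, u ≠ v → ¬ G.Adj u v → ∀ Q₁ ∈ F', ∀ Q₂ ∈ F', u ∈ Q₁ → v ∈ Q₁ →
    u ∈ Q₂ → v ∈ Q₂ → Q₁ = Q₂ := by
  intro u v hne huv R1 hR1 R2 hR2 a b c d
  have hu := h.sub' R1 hR1 a
  have hv := h.sub' R1 hR1 b
  simp only [Finset.mem_insert] at hu hv
  rcases hu with rfl | rfl | hu <;> rcases hv with rfl | rfl | hv
  · exact absurd rfl hne
  · exact absurd h.xy huv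
  · exact h.nonedge_xU hv huv R1 hR1 R2 hR2 a b c d
  · exact absurd h.xy.symm huv
  · exact absurd rfl hne
  · exact h.swap.nonedge_xU hv huv R1 hR1 R2 hR2 a b c d
  · exact h.nonedge_xU hu (fun e => huv e.symm) R1 hR1 R2 hR2 b a d c
  · exact h.swap.nonedge_xU hu (fun e => huv e.symm) R1 hR1 R2 hR2 b a d c
  · have key : ∀ R ∈ F', u ∈ R → v ∈ R → ∃ Q ∈ F, R = φ Q ∧ u ∈ Q ∧ v ∈ Q := by
      intro R hR huR hvR
      rcases (h.hF' R).1 hR with ⟨Q, hQ, rfl⟩ | ⟨w, hw, h1, h2, rfl⟩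
      · rw [h.φU _ hQ _ hu] at huR
        rw [h.φU _ hQ _ hv] at hvR
        exact ⟨Q, hQ, rfl, huR, hvR⟩
      · exact absurd ((h.memTU hu huR).trans (h.memTU hv hvR).symm) hne
    obtain ⟨Q1, hQ1, rfl, e1, e2⟩ := key R1 hR1 a b
    obtain ⟨Q2, hQ2, rfl, f1, f2⟩ := key R2 hR2 c d
    congr 1
    exact h.cF.nonedge u v hne (by rwa [h.gU u hu v hv]) Q1 hQ1 Q2 hQ2 e1 e2 f1 f2

omit h
end SD
namespace SD

variable {G G' : SimpleGraph V} {U : Finset V} {F F' Bf : Finset (Finset V)} {Z : Finset V}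
    {x y z : V} {hx hy : Finset V → Prop} {φ : Finset V → Finset V}

variable (h : SD G G' U F F' Bf Z x y z hx hy φ)
include h

theorem nbz {Q : Finset V} (hQ : Q ∈ F) (hz : z ∈ Q) {v : V} (hv : v ∈ Q)
    (hzv : G'.Adj z v) : (x ∈ φ Q ∧ G.Adj x v) ∨ (y ∈ φ Q ∧ G.Adj y v) := by
  rw [h.φx Q hQ, h.φy Q hQ]
  by_cases h1 : hx Q
  · by_cases h2 : hy Q
    · obtain ⟨u, hu, w, hw, e1, e2, e3, e4, e5, e6, e7⟩ := h.nb_both hQ hz h1 h2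
      rcases e7 v hv hzv with rfl | rfl
      · left; exact ⟨⟨hz, h1⟩, e3⟩
      · right; exact ⟨⟨hz, h2⟩, e5⟩
    · left; exact ⟨⟨hz, h1⟩, h.P4 Q hQ hz h2 v hv hzv⟩
  · right
    have h2 : hy Q := (h.P0 Q hQ hz).resolve_left h1
    exact ⟨⟨hz, h2⟩, h.P5 Q hQ hz h1 v hv hzv⟩

theorem rot_U {v : V} (hv : v ∈ U) (P : V → Prop)
    (ha : ∃ a ∈ insert x (insert y U), G.Adj v a ∧ P a)
    (hb : ∃ b ∈ insert x (insert y U), G.Adj v b ∧ ¬ P b) :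
    ∃ Q ∈ F', v ∈ Q ∧ (∃ a ∈ Q, G.Adj v a ∧ P a) ∧ (∃ b ∈ Q, G.Adj v b ∧ ¬ P b) := by
  by_cases hc : G.Adj x v ∧ G.Adj y v ∧ (P x ↔ ¬ P y)
  · obtain ⟨h1, h2, h3⟩ := hc
    refine ⟨_, h.memT hv h1 h2, by simp, ?_⟩
    by_cases hp : P x
    · exact ⟨⟨x, by simp, h1.symm, hp⟩, ⟨y, by simp, h2.symm, h3.1 hp⟩⟩
    · exact ⟨⟨y, by simp, h2.symm, by tauto⟩, ⟨x, by simp, h1.symm, hp⟩⟩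
  have hzU := h.zU
  have hzv := h.gz v hv
  let P' : V → Prop := fun w => (w ∈ U ∧ P w) ∨ (w = z ∧ ((G.Adj x v ∧ P x) ∨ (G.Adj y v ∧ P y)))
  have pU : ∀ w ∈ U, (P' w ↔ P w) := by
    intro w hw
    have : w ≠ z := by rintro rfl; exact hzU hw
    simp only [P']; tauto
  have px : G.Adj x v → (P' z ↔ P x) := by
    intro e
    simp only [P']; tauto
  have py : G.Adj y v → (P' z ↔ P y) := by
    intro e
    simp only [P']; tauto
  have lift : ∀ a ∈ insert x (insert y U), G.Adj v a →
      ∃ a' ∈ insert z U, G'.Adj v a' ∧ (P' a' ↔ P a) := by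
    intro a ha hva
    simp only [Finset.mem_insert] at ha
    rcases ha with rfl | rfl | ha
    · exact ⟨z, by simp, (hzv.2 (Or.inl hva.symm)).symm, px hva.symm⟩
    · exact ⟨z, by simp, (hzv.2 (Or.inr hva.symm)).symm, py hva.symm⟩
    · exact ⟨a, by simp [ha], (h.gU v hv a ha).2 hva, pU a ha⟩
  obtain ⟨a, ha, hva, hPa⟩ := ha
  obtain ⟨b, hb, hvb, hPb⟩ := hb
  obtain ⟨a', ha', e1, e2⟩ := lift a ha hva
  obtain ⟨b', hb', f1, f2⟩ := lift b hb hvb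
  obtain ⟨Q, hQ, hvQ, ⟨c, hc, hvc, hPc⟩, ⟨d, hd, hvd, hPd⟩⟩ := h.cF.rot v (by simp [hv]) P'
    ⟨a', ha', e1, e2.2 hPa⟩ ⟨b', hb', f1, fun e => hPb (f2.1 e)⟩
  have down : ∀ c ∈ Q, G'.Adj v c → ∃ c' ∈ φ Q, G.Adj v c' ∧ (P c' ↔ P' c) := by
    intro c hc hvc
    rcases h.memQ hQ hc with rfl | hcU
    · rcases h.nbz hQ hc hvQ hvc.symm with ⟨g1, g2⟩ | ⟨g1, g2⟩
      · exact ⟨x, g1, g2.symm, (px g2).symm⟩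
      · exact ⟨y, g1, g2.symm, (py g2).symm⟩
    · exact ⟨c, (h.φU Q hQ c hcU).2 hc, (h.gU v hv c hcU).1 hvc, (pU c hcU).symm⟩
  obtain ⟨c', g1, g2, g3⟩ := down c hc hvc
  obtain ⟨d', k1, k2, k3⟩ := down d hd hvd
  exact ⟨φ Q, h.memF hQ, (h.φU Q hQ v hv).2 hvQ, ⟨c', g1, g2, g3.2 hPc⟩,
    ⟨d', k1, k2, fun e => hPd (k3.1 e)⟩⟩

theorem rot_x1 (P : V → Prop) (hPy : ¬ P y)
    (ha : ∃ a ∈ insert x (insert y U), G.Adj x a ∧ P a) :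
    ∃ Q ∈ F', x ∈ Q ∧ (∃ a ∈ Q, G.Adj x a ∧ P a) ∧ (∃ b ∈ Q, G.Adj x b ∧ ¬ P b) := by
  obtain ⟨a, ha, hxa, hPa⟩ := ha
  have haU : a ∈ U := by
    simp only [Finset.mem_insert] at ha
    rcases ha with rfl | rfl | ha
    · exact absurd rfl hxa.ne
    · exact absurd hPa hPy
    · exact ha
  have tri : ∀ u ∈ U, G.Adj x u → G.Adj y u → P u → ∃ Q ∈ F', x ∈ Q ∧
      (∃ a ∈ Q, G.Adj x a ∧ P a) ∧ (∃ b ∈ Q, G.Adj x b ∧ ¬ P b) := by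
    intro u hu h1 h2 h3
    exact ⟨_, h.memT hu h1 h2, by simp, ⟨u, by simp, h1, h3⟩, ⟨y, by simp, h.xy, hPy⟩⟩
  by_cases hc : ∃ b ∈ U, G'.Adj z b ∧ ¬ (G.Adj x b ∧ P b)
  · obtain ⟨b, hb, hzb, hPb⟩ := hc
    obtain ⟨Q, hQ, hz, ⟨c, hc, hzc, hxc, hPc⟩, ⟨d, hd, hzd, hPd⟩⟩ := h.cF.rot z (by simp)
      (fun w => G.Adj x w ∧ P w)
      ⟨a, by simp [haU], (h.gz a haU).2 (Or.inl hxa), hxa, hPa⟩ ⟨b, by simp [hb], hzb, hPb⟩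
    have hcU : c ∈ U := (h.memQ hQ hc).resolve_left hzc.ne'
    have hdU : d ∈ U := (h.memQ hQ hd).resolve_left hzd.ne'
    by_cases h1 : hx Q
    · refine ⟨φ Q, h.memF hQ, (h.φx Q hQ).2 ⟨hz, h1⟩, ⟨c, (h.φU Q hQ c hcU).2 hc, hxc, hPc⟩, ?_⟩
      by_cases hxd : G.Adj x d
      · exact ⟨d, (h.φU Q hQ d hdU).2 hd, hxd, fun e => hPd ⟨hxd, e⟩⟩
      · have h2 : hy Q := by
          by_contra h2
          exact hxd (h.P4 Q hQ hz h2 d hd hzd)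
        exact ⟨y, (h.φy Q hQ).2 ⟨hz, h2⟩, h.xy, hPy⟩
    · exact tri c hcU hxc (h.P5 Q hQ hz h1 c hc hzc) hPc
  · push Not at hc
    obtain ⟨u, hu, hyu⟩ := h.NY
    have := hc u hu ((h.gz u hu).2 (Or.inr hyu))
    exact tri u hu this.1 hyu this.2

theorem rot_x (P : V → Prop)
    (ha : ∃ a ∈ insert x (insert y U), G.Adj x a ∧ P a)
    (hb : ∃ b ∈ insert x (insert y U), G.Adj x b ∧ ¬ P b) :
    ∃ Q ∈ F', x ∈ Q ∧ (∃ a ∈ Q, G.Adj x a ∧ P a) ∧ (∃ b ∈ Q, G.Adj x b ∧ ¬ P b) := by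
  by_cases hPy : P y
  · obtain ⟨Q, hQ, h1, h2, h3⟩ := h.rot_x1 (fun w => ¬ P w) (not_not.2 hPy) hb
    exact ⟨Q, hQ, h1, by simpa using h3, h2⟩
  · exact h.rot_x1 P hPy ha

theorem rot' : ∀ v ∈ insert x (insert y U), ∀ P : V → Prop,
    (∃ a ∈ insert x (insert y U), G.Adj v a ∧ P a) →
    (∃ b ∈ insert x (insert y U), G.Adj v b ∧ ¬ P b) →
    ∃ Q ∈ F', v ∈ Q ∧ (∃ a ∈ Q, G.Adj v a ∧ P a) ∧ (∃ b ∈ Q, G.Adj v b ∧ ¬ P b) := by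
  intro v hv P ha hb
  simp only [Finset.mem_insert] at hv
  rcases hv with rfl | rfl | hv
  · exact h.rot_x P ha hb
  · rw [Finset.insert_comm] at ha hb
    exact h.swap.rot_x P ha hb
  · exact h.rot_U hv P ha hb

theorem conn_UU {Q : Finset V} (hQ : Q ∈ F) {u v : V} (hu : u ∈ U) (hv : v ∈ U) (huQ : u ∈ Q)
    (hvQ : v ∈ Q) (huv : G.Adj u v) : CS G (((φ Q).erase u).erase v) := by
  have hzU := h.zU
  have hzu : z ≠ u := by rintro rfl; exact hzU hu
  have hzv : z ≠ v := by rintro rfl; exact hzU hv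
  have hxu : x ≠ u := by rintro rfl; exact h.xU hu
  have hxv : x ≠ v := by rintro rfl; exact h.xU hv
  have hyu : y ≠ u := by rintro rfl; exact h.yU hu
  have hyv : y ≠ v := by rintro rfl; exact h.yU hv
  have old := h.cF.conn Q hQ u huQ v hvQ ((h.gU u hu v hv).2 huv)
  have πU : ∀ w ∈ U, (if w ∈ U then w else z) = w := fun w hw => if_pos hw
  have πx : (if x ∈ U then x else z) = z := if_neg h.xU
  have πy : (if y ∈ U then y else z) = z := if_neg h.yU
  have hzed : ∀ b ∈ (Q.erase u).erase v, z ∈ Q → G'.Adj z b → b ∈ U ∧ ∃ a ∈ ((φ Q).erase u).erase v,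
      (if a ∈ U then a else z) = z ∧ G.Adj a b ∧ b ∈ ((φ Q).erase u).erase v := by
    intro b hb hz hzb
    simp only [Finset.mem_erase] at hb
    have hbU := (h.memQ hQ hb.2.2).resolve_left hzb.ne'
    have hb' : b ∈ ((φ Q).erase u).erase v := by
      simp only [Finset.mem_erase]
      exact ⟨hb.1, hb.2.1, (h.φU Q hQ b hbU).2 hb.2.2⟩
    refine ⟨hbU, ?_⟩
    rcases h.nbz hQ hz hb.2.2 hzb with ⟨g1, g2⟩ | ⟨g1, g2⟩
    · exact ⟨x, by simp [hxu, hxv, g1], πx, g2, hb'⟩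
    · exact ⟨y, by simp [hyu, hyv, g1], πy, g2, hb'⟩
  refine CS_lift (fun w => if w ∈ U then w else z) old ?_ ?_ ?_ ?_
  · intro a ha
    simp only [Finset.mem_erase] at ha
    rcases h.φs Q hQ a ha.2.2 with haU | rfl | rfl
    · simp only [haU, if_true, Finset.mem_erase]
      exact ⟨ha.1, ha.2.1, (h.φU Q hQ a haU).1 ha.2.2⟩
    · simp only [πx, Finset.mem_erase]
      exact ⟨hzv, hzu, ((h.φx Q hQ).1 ha.2.2).1⟩
    · simp only [πy, Finset.mem_erase]
      exact ⟨hzv, hzu, ((h.φy Q hQ).1 ha.2.2).1⟩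
  · intro a ha b hb hab
    simp only [Finset.mem_erase] at ha hb
    have h1 := h.φs Q hQ a ha.2.2
    have h2 := h.φs Q hQ b hb.2.2
    have hxy := h.xy
    have hyx := h.xy.symm
    by_cases haU : a ∈ U <;> by_cases hbU : b ∈ U
    · simp only [haU, hbU, if_true] at hab
      exact Or.inl hab
    · simp only [haU, hbU, if_true, if_false] at hab
      rw [hab] at haU
      exact absurd haU hzU
    · simp only [haU, hbU, if_true, if_false] at hab
      rw [← hab] at hbU
      exact absurd hbU hzU
    · rcases h1 with h1 | rfl | rfl <;> rcases h2 with h2 | rfl | rfl <;> tauto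
  · intro a' ha' b' hb' hab
    have ha2 := ha'
    have hb2 := hb'
    simp only [Finset.mem_erase] at ha2 hb2
    rcases h.memQ hQ ha2.2.2 with rfl | haU
    · obtain ⟨g1, a, g2, g3, g4, g5⟩ := hzed b' hb' ha2.2.2 hab
      exact ⟨a, g2, b', g5, g3, πU b' g1, g4⟩
    · rcases h.memQ hQ hb2.2.2 with rfl | hbU
      · obtain ⟨g1, a, g2, g3, g4, g5⟩ := hzed a' ha' hb2.2.2 hab.symm
        exact ⟨a', g5, a, g2, πU a' g1, g3, g4.symm⟩
      · refine ⟨a', ?_, b', ?_, πU a' haU, πU b' hbU, (h.gU a' haU b' hbU).1 hab⟩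
        · simp only [Finset.mem_erase]
          exact ⟨ha2.1, ha2.2.1, (h.φU Q hQ a' haU).2 ha2.2.2⟩
        · simp only [Finset.mem_erase]
          exact ⟨hb2.1, hb2.2.1, (h.φU Q hQ b' hbU).2 hb2.2.2⟩
  · intro a' ha'
    simp only [Finset.mem_erase] at ha'
    rcases h.memQ hQ ha'.2.2 with rfl | haU
    · rcases h.P0 Q hQ ha'.2.2 with g | g
      · exact ⟨x, by simp [hxu, hxv, (h.φx Q hQ), ha'.2.2, g], πx⟩
      · exact ⟨y, by simp [hyu, hyv, (h.φy Q hQ), ha'.2.2, g], πy⟩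
    · refine ⟨a', ?_, πU a' haU⟩
      simp only [Finset.mem_erase]
      exact ⟨ha'.1, ha'.2.1, (h.φU Q hQ a' haU).2 ha'.2.2⟩

theorem conn_z {Q : Finset V} (hQ : Q ∈ F) {u : V} (hz : z ∈ Q) (huQ : u ∈ Q)
    (hzu : G'.Adj z u) : CS G ((Q.erase z).erase u) := by
  refine CS_congr ?_ (h.cF.conn Q hQ z hz u huQ hzu)
  intro a ha b hb
  simp only [Finset.mem_erase] at ha hb
  exact h.gU a ((h.memQ hQ ha.2.2).resolve_left ha.2.1) b ((h.memQ hQ hb.2.2).resolve_left hb.2.1)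

theorem conn_xU {Q : Finset V} (hQ : Q ∈ F) {u : V} (hu : u ∈ U) (hz : z ∈ Q) (h1 : hx Q)
    (huQ : u ∈ Q) (hxu : G.Adj x u) : CS G (((φ Q).erase x).erase u) := by
  have hzu := (h.gz u hu).2 (Or.inl hxu)
  have hc := h.conn_z hQ hz huQ hzu
  by_cases h2 : hy Q
  · have e : ((φ Q).erase x).erase u = insert y ((Q.erase z).erase u) := by
      ext w
      have i1 := h.φU Q hQ w
      have i3 := h.φy Q hQ
      have i4 := h.φs Q hQ w
      have i5 : w ∈ Q → w = z ∨ w ∈ U := h.memQ hQ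
      have i6 : w ∈ U → w ≠ x := by rintro a rfl; exact h.xU a
      have i7 : w ∈ U → w ≠ z := by rintro a rfl; exact h.zU a
      have i8 : y ≠ u := by rintro rfl; exact h.yU hu
      have i9 := h.xy.ne
      simp only [Finset.mem_erase, Finset.mem_insert]
      grind
    rw [e]
    obtain ⟨p, hp, q, hq, e1, e2, e3, e4, e5, e6, e7⟩ := h.nb_both hQ hz h1 h2
    refine CS_insert hc ⟨q, ?_, e5⟩
    simp only [Finset.mem_erase]
    refine ⟨?_, ?_, hq⟩
    · rintro rfl; exact e6 hxu
    · rintro rfl; exact h.zU e2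
  · have e : ((φ Q).erase x).erase u = (Q.erase z).erase u := by
      ext w
      have i1 := h.φU Q hQ w
      have i3 := h.φy Q hQ
      have i4 := h.φs Q hQ w
      have i5 : w ∈ Q → w = z ∨ w ∈ U := h.memQ hQ
      have i6 : w ∈ U → w ≠ x := by rintro a rfl; exact h.xU a
      have i7 : w ∈ U → w ≠ z := by rintro a rfl; exact h.zU a
      simp only [Finset.mem_erase]
      grind
    rwa [e]

theorem conn_xy {Q : Finset V} (hQ : Q ∈ F) (hz : z ∈ Q) (h1 : hx Q) (h2 : hy Q) :
    CS G (((φ Q).erase x).erase y) := by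
  obtain ⟨p, hp, q, hq, e1, e2, e3, e4, e5, e6, e7⟩ := h.nb_both hQ hz h1 h2
  have hc := h.conn_z hQ hz hp ((h.gz p e1).2 (Or.inl e3))
  have e : ((φ Q).erase x).erase y = insert p ((Q.erase z).erase p) := by
    ext w
    have i1 := h.φU Q hQ w
    have i4 := h.φs Q hQ w
    have i5 : w ∈ Q → w = z ∨ w ∈ U := h.memQ hQ
    have i6 : w ∈ U → w ≠ x := by rintro a rfl; exact h.xU a
    have i8 : w ∈ U → w ≠ y := by rintro a rfl; exact h.yU a
    have i7 : w ∈ U → w ≠ z := by rintro a rfl; exact h.zU a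
    simp only [Finset.mem_erase, Finset.mem_insert]
    grind
  rw [e]
  apply CS_insert hc
  obtain ⟨a, ha, b, hb, hab, f1, f2, f3⟩ := h.cF.deg Q hQ p hp
  by_cases haz : a = z
  · have hbU := (h.memQ hQ hb).resolve_left (by rintro rfl; exact hab haz)
    refine ⟨b, ?_, (h.gU p e1 b hbU).1 f2⟩
    simp only [Finset.mem_erase]
    exact ⟨f2.ne', by rintro rfl; exact h.zU hbU, hb⟩
  · have haU := (h.memQ hQ ha).resolve_left haz
    refine ⟨a, ?_, (h.gU p e1 a haU).1 f1⟩
    simp only [Finset.mem_erase]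
    exact ⟨f1.ne', haz, ha⟩

theorem conn' : ∀ Q ∈ F', ∀ u ∈ Q, ∀ v ∈ Q, G.Adj u v → CS G ((Q.erase u).erase v) := by
  intro R hR u huR v hvR huv
  rcases (h.hF' R).1 hR with ⟨Q, hQ, rfl⟩ | ⟨w, hw, h1, h2, rfl⟩
  · rcases h.φs Q hQ u huR with hu | rfl | rfl <;> rcases h.φs Q hQ v hvR with hv | rfl | rfl
    · exact h.conn_UU hQ hu hv ((h.φU Q hQ u hu).1 huR) ((h.φU Q hQ v hv).1 hvR) huv
    · rw [Finset.erase_right_comm]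
      rw [h.φx Q hQ] at hvR
      exact h.conn_xU hQ hu hvR.1 hvR.2 ((h.φU Q hQ u hu).1 huR) huv.symm
    · rw [Finset.erase_right_comm]
      rw [h.φy Q hQ] at hvR
      exact h.swap.conn_xU hQ hu hvR.1 hvR.2 ((h.φU Q hQ u hu).1 huR) huv.symm
    · rw [h.φx Q hQ] at huR
      exact h.conn_xU hQ hv huR.1 huR.2 ((h.φU Q hQ v hv).1 hvR) huv
    · exact absurd rfl huv.ne
    · rw [h.φx Q hQ] at huR
      rw [h.φy Q hQ] at hvR
      exact h.conn_xy hQ huR.1 huR.2 hvR.2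
    · rw [h.φy Q hQ] at huR
      exact h.swap.conn_xU hQ hv huR.1 huR.2 ((h.φU Q hQ v hv).1 hvR) huv
    · rw [h.φy Q hQ] at huR
      rw [h.φx Q hQ] at hvR
      exact h.swap.conn_xy hQ huR.1 huR.2 hvR.2
    · exact absurd rfl huv.ne
  · have n1 := h1.ne
    have n2 := h2.ne
    have n3 := h.xy.ne
    have n4 := huv.ne
    simp only [Finset.mem_insert, Finset.mem_singleton] at huR hvR
    obtain ⟨t, ht⟩ : ∃ t, (({x, y, w} : Finset V).erase u).erase v = {t} := by
      rw [← Finset.card_eq_one, Finset.card_erase_of_mem, Finset.card_erase_of_mem]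
      · rw [Finset.card_eq_three.2 ⟨x, y, w, n3, n1, n2, rfl⟩]
      · simpa using huR
      · simp only [Finset.mem_erase, Finset.mem_insert, Finset.mem_singleton]
        exact ⟨n4.symm, hvR⟩
    rw [ht]
    exact CS_singleton G t

theorem cardφ {Q : Finset V} (hQ : Q ∈ F) : (φ Q).card = Q.card + if Q ∈ Bf then 1 else 0 := by
  have hs := h.φs Q hQ
  have hU := h.φU Q hQ
  have hxx := h.φx Q hQ
  have hyy := h.φy Q hQ
  have hm : ∀ w ∈ Q, w = z ∨ w ∈ U := fun w hw => h.memQ hQ hw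
  have a1 := h.xU
  have a2 := h.yU
  have a3 := h.zU
  have a4 := h.xy.ne
  have b1 : x ∉ Q.erase z := by
    intro e; rw [Finset.mem_erase] at e; exact a1 ((hm x e.2).resolve_left e.1)
  have b2 : y ∉ Q.erase z := by
    intro e; rw [Finset.mem_erase] at e; exact a2 ((hm y e.2).resolve_left e.1)
  by_cases hz : z ∈ Q
  · have hc := Finset.card_erase_add_one hz
    have h0 := h.P0 Q hQ hz
    by_cases h1 : hx Q <;> by_cases h2 : hy Q
    · have e : φ Q = insert x (insert y (Q.erase z)) := by
        ext w; simp only [Finset.mem_insert, Finset.mem_erase]; grind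
      rw [e, Finset.card_insert_of_notMem, Finset.card_insert_of_notMem b2, hc,
        if_pos ((h.hB Q).2 ⟨hQ, hz, h1, h2⟩)]
      rw [Finset.mem_insert]; tauto
    · have e : φ Q = insert x (Q.erase z) := by
        ext w; simp only [Finset.mem_insert, Finset.mem_erase]; grind
      rw [e, Finset.card_insert_of_notMem b1, hc, if_neg (by rw [h.hB]; tauto), add_zero]
    · have e : φ Q = insert y (Q.erase z) := by
        ext w; simp only [Finset.mem_insert, Finset.mem_erase]; grind
      rw [e, Finset.card_insert_of_notMem b2, hc, if_neg (by rw [h.hB]; tauto), add_zero]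
    · tauto
  · have e : φ Q = Q := by ext w; grind
    rw [e, if_neg (by rw [h.hB]; tauto), add_zero]

theorem count' : ∑ Q ∈ F', Q.card + 4 ≤ 2 * (insert x (insert y U)).card + 2 * F'.card := by
  have hF : F' = F.image φ ∪ Z.image (fun u => ({x, y, u} : Finset V)) := by
    ext R
    rw [h.hF']
    simp only [Finset.mem_union, Finset.mem_image, h.hZ]
    constructor
    · rintro (⟨Q, hQ, rfl⟩ | ⟨u, hu, a, b, rfl⟩)
      · exact Or.inl ⟨Q, hQ, rfl⟩
      · exact Or.inr ⟨u, ⟨hu, a, b⟩, rfl⟩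
    · rintro (⟨Q, hQ, rfl⟩ | ⟨u, ⟨hu, a, b⟩, rfl⟩)
      · exact Or.inl ⟨Q, hQ, rfl⟩
      · exact Or.inr ⟨u, hu, a, b, rfl⟩
  have i1 : Set.InjOn φ F := fun u hu v hv e => h.inj hu hv e
  have i2 : Set.InjOn (fun u => ({x, y, u} : Finset V)) Z := by
    intro u hu v hv e
    simp only [Finset.mem_coe, h.hZ] at hu hv
    exact h.tri_inj hu.1 hv.1 e
  have hd : Disjoint (F.image φ) (Z.image (fun u => ({x, y, u} : Finset V))) := by
    rw [Finset.disjoint_left]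
    intro R h1 h2
    simp only [Finset.mem_image, h.hZ] at h1 h2
    obtain ⟨Q, hQ, rfl⟩ := h1
    obtain ⟨u, ⟨hu, a, b⟩, e⟩ := h2
    exact h.tri_ne hu a b hQ e.symm
  have hBF : Bf ⊆ F := fun Q hQ => ((h.hB Q).1 hQ).1
  have s1 : ∑ Q ∈ F', Q.card = ∑ Q ∈ F, Q.card + Bf.card + 3 * Z.card := by
    rw [hF, Finset.sum_union hd, Finset.sum_image i1, Finset.sum_image i2,
      Finset.sum_congr rfl (fun Q hQ => h.cardφ hQ), Finset.sum_add_distrib]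
    congr 1
    · congr 1
      rw [← Finset.sum_filter, ← Finset.card_eq_sum_ones]
      congr 1
      ext Q; simp only [Finset.mem_filter]; exact ⟨fun e => e.2, fun e => ⟨hBF e, e⟩⟩
    · rw [Finset.sum_congr rfl (g := fun _ => 3)]
      · simp [mul_comm]
      · intro u hu
        rw [h.hZ] at hu
        exact Finset.card_eq_three.2 ⟨x, y, u, h.xy.ne, hu.2.1.ne, hu.2.2.ne, rfl⟩
  have s2 : F'.card = F.card + Z.card := by
    rw [hF, Finset.card_union_of_disjoint hd, Finset.card_image_of_injOn i1,
      Finset.card_image_of_injOn i2]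
  have s3 : (insert x (insert y U)).card = U.card + 2 := by
    rw [Finset.card_insert_of_notMem, Finset.card_insert_of_notMem h.yU]
    rw [Finset.mem_insert]
    have := h.xU
    have := h.xy.ne
    tauto
  have s4 := h.cF.count
  rw [Finset.card_insert_of_notMem h.zU] at s4
  have := h.P7
  omega

theorem ne' : ∀ R ∈ F', R.Nonempty := by
  intro R hR
  rcases (h.hF' R).1 hR with ⟨Q, hQ, rfl⟩ | ⟨u, hu, a, b, rfl⟩
  · obtain ⟨w, hw⟩ := h.cF.ne Q hQ
    rcases Finset.mem_insert.1 (h.cF.sub Q hQ hw) with rfl | hwU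
    · rcases h.P0 Q hQ hw with h1 | h1
      · exact ⟨x, (h.φx Q hQ).2 ⟨hw, h1⟩⟩
      · exact ⟨y, (h.φy Q hQ).2 ⟨hw, h1⟩⟩
    · exact ⟨w, (h.φU Q hQ w hwU).2 hw⟩
  · exact ⟨x, by simp⟩

theorem cert : Cert G (insert x (insert y U)) F' :=
  ⟨h.sub', h.deg', h.edge', h.nonedge', h.rot', h.conn', h.count', h.ne'⟩

omit h
end SD

theorem Cert.deg2 {G : SimpleGraph V} {S : Finset V} {F : Finset (Finset V)} (h : Cert G S F)
    {Q : Finset V} (hQ : Q ∈ F) {z a b c : V} (hz : z ∈ Q) (ha : a ∈ Q) (hb : b ∈ Q) (hc : c ∈ Q)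
    (h1 : G.Adj z a) (h2 : G.Adj z b) (h3 : G.Adj z c) (hab : a ≠ b) : c = a ∨ c = b := by
  obtain ⟨d, _, e, _, _, _, _, f⟩ := h.deg Q hQ z hz
  have := f a ha h1
  have := f b hb h2
  have := f c hc h3
  grind

theorem Cert.fac2 {G : SimpleGraph V} {S : Finset V} {F : Finset (Finset V)} (h : Cert G S F)
    {A B C : Finset V} (hA : A ∈ F) (hB : B ∈ F) (hC : C ∈ F) {z w : V} (hzw : G.Adj z w)
    (hzA : z ∈ A) (hzB : z ∈ B) (hzC : z ∈ C) (hwA : w ∈ A) (hwB : w ∈ B) (hwC : w ∈ C)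
    (hAB : A ≠ B) : C = A ∨ C = B := by
  obtain ⟨Q1, _, Q2, _, _, _, _, _, _, f⟩ := h.edge z (h.sub A hA hzA) w (h.sub A hA hwA) hzw
  have := f A hA hzA hwA
  have := f B hB hzB hwB
  have := f C hC hzC hwC
  grind

/-- cyclic enumeration of the neighbours of `z` and of the faces at `z` -/
structure Enum (G : SimpleGraph V) (S : Finset V) (F : Finset (Finset V)) (z : V) (n : ℕ)
    (p : ℕ → V) (q : ℕ → Finset V) : Prop where
  n3 : 3 ≤ n
  pn : ∀ i, p (i + n) = p i
  qn : ∀ i, q (i + n) = q i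
  qF : ∀ i, q i ∈ F
  zq : ∀ i, z ∈ q i
  pq : ∀ i, p i ∈ q i
  pq' : ∀ i, p (i + 1) ∈ q i
  pz : ∀ i, G.Adj z (p i)
  cov : ∀ w ∈ S, G.Adj z w → ∃ i, p i = w
  inj : ∀ i j, p i = p j → i ≡ j [MOD n]

theorem exists_enum {G : SimpleGraph V} {S : Finset V} {F : Finset (Finset V)} (h : Cert G S F)
    {z : V} (hzS : z ∈ S) (h3 : ∃ a ∈ S, ∃ b ∈ S, ∃ c ∈ S, a ≠ b ∧ a ≠ c ∧ b ≠ c ∧ G.Adj z a ∧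
      G.Adj z b ∧ G.Adj z c) : ∃ n p q, Enum G S F z n p q := by
  classical
  let D := {d : V × Finset V // d.2 ∈ F ∧ z ∈ d.2 ∧ d.1 ∈ d.2 ∧ G.Adj z d.1}
  have step : ∀ d : D, ∃ e : D, e.1.1 ≠ d.1.1 ∧ e.1.1 ∈ d.1.2 ∧ e.1.2 ≠ d.1.2 := by
    rintro ⟨⟨w, Q⟩, hQ, hz, hw, hzw⟩
    obtain ⟨a, ha, b, hb, hab, f1, f2, f3⟩ := h.deg Q hQ z hz
    obtain ⟨w', hw', hne, hzw'⟩ : ∃ w' ∈ Q, w' ≠ w ∧ G.Adj z w' := by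
      by_cases hh : a = w
      · exact ⟨b, hb, fun e => hab (hh.trans e.symm), f2⟩
      · exact ⟨a, ha, hh, f1⟩
    obtain ⟨A, hA, B, hB, hAB, g1, g2, g3, g4, g5⟩ := h.edge z hzS w' (h.sub Q hQ hw') hzw'
    by_cases hh : A = Q
    · exact ⟨⟨(w', B), hB, g3, g4, hzw'⟩, hne, hw', fun e => hAB (hh.trans e.symm)⟩
    · exact ⟨⟨(w', A), hA, g1, g2, hzw'⟩, hne, hw', hh⟩
  choose f hf using step
  obtain ⟨a0, ha0, b0, hb0, c0, hc0, hab0, hac0, hbc0, hza, hzb, hzc⟩ := h3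
  obtain ⟨A0, hA0, _, _, _, g1, g2, _⟩ := h.edge z hzS a0 ha0 hza
  let d : ℕ → D := fun i => f^[i] ⟨(a0, A0), hA0, g1, g2, hza⟩
  have hd : ∀ i, d (i + 1) = f (d i) := fun i => Function.iterate_succ_apply' f i _
  let P : ℕ → V := fun i => (d i).1.1
  let R : ℕ → Finset V := fun i => (d i).1.2
  have RF : ∀ i, R i ∈ F := fun i => (d i).2.1
  have zR : ∀ i, z ∈ R i := fun i => (d i).2.2.1
  have PR : ∀ i, P i ∈ R i := fun i => (d i).2.2.2.1
  have zP : ∀ i, G.Adj z (P i) := fun i => (d i).2.2.2.2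
  have Pne : ∀ i, P (i + 1) ≠ P i := fun i => by simp only [P, hd]; exact (hf (d i)).1
  have PR' : ∀ i, P (i + 1) ∈ R i := fun i => by simp only [P, hd]; exact (hf (d i)).2.1
  have Rne : ∀ i, R (i + 1) ≠ R i := fun i => by simp only [R, hd]; exact (hf (d i)).2.2
  have P0 : P 0 = a0 := rfl
  clear_value P R
  have PS : ∀ i, P i ∈ S := fun i => h.sub _ (RF i) (PR i)
  -- first repetition
  have hex : ∃ n, ∃ m < n, P m = P n := by
    by_contra hno
    push Not at hno
    have hinj : Function.Injective P := by
      intro i j e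
      rcases lt_trichotomy i j with hl | hl | hl
      · exact absurd e (hno j i hl)
      · exact hl
      · exact absurd e.symm (hno i j hl)
    have := Infinite.of_injective (fun i => (⟨P i, PS i⟩ : S)) (fun i j e => hinj (by simpa using e))
    exact not_finite S
  obtain ⟨m, hmn, hPm⟩ := Nat.find_spec hex
  have hmin : ∀ j < Nat.find hex, ∀ i < j, P i ≠ P j := by
    intro j hj i hi e
    exact Nat.find_min hex hj ⟨i, hi, e⟩
  generalize Nat.find hex = n at *
  have hinj : ∀ i < n, ∀ j < n, P i = P j → i = j := by
    intro i hi j hj e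
    rcases lt_trichotomy i j with hl | hl | hl
    · exact absurd e (hmin j hj i hl)
    · exact hl
    · exact absurd e.symm (hmin i hi j hl)
  have hmn1 : m + 1 < n := by
    rcases Nat.lt_or_ge (m + 1) n with e | e
    · exact e
    · have : n = m + 1 := by omega
      subst this
      exact absurd hPm.symm (Pne m)
  obtain ⟨k, rfl⟩ : ∃ k, n = k + 1 := ⟨n - 1, by omega⟩
  have hm0 : m = 0 := by
    by_contra hm
    obtain ⟨l, rfl⟩ : ∃ l, m = l + 1 := ⟨m - 1, by omega⟩
    have hk : P (l + 1) ∈ R k := by rw [hPm]; exact PR' k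
    rcases h.fac2 (RF (l + 1)) (RF l) (RF k) (zP (l + 1)) (zR _) (zR _) (zR _) (PR _) (PR' _) hk
      (Rne l) with e | e
    · have h1 : P k ∈ R (l + 1) := e ▸ PR k
      rcases h.deg2 (RF (l + 1)) (zR _) (PR' (l + 1)) (PR _) h1 (zP _) (zP _) (zP _) (Pne _)
        with e1 | e1
      · have := hinj _ (by omega) _ (by omega) e1
        subst this
        exact Rne _ e
      · have := hinj _ (by omega) _ (by omega) e1
        omega
    · have h1 : P k ∈ R l := e ▸ PR k
      rcases h.deg2 (RF l) (zR _) (PR' l) (PR _) h1 (zP _) (zP _) (zP _) (Pne _)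
        with e1 | e1
      · have := hinj _ (by omega) _ (by omega) e1
        omega
      · have := hinj _ (by omega) _ (by omega) e1
        omega
  subst hm0
  have hR0 : R k ≠ R 0 := by
    intro e
    have h1 : P k ∈ R 0 := e ▸ PR k
    rcases h.deg2 (RF 0) (zR _) (PR' 0) (PR _) h1 (zP _) (zP _) (zP _) (Pne _) with e1 | e1
    · have := hinj _ (by omega) _ (by omega) e1
      subst this
      exact Rne _ e
    · have := hinj _ (by omega) _ (by omega) e1
      omega
  have hk0 : P 0 ∈ R k := by rw [hPm]; exact PR' k
  have hcov : ∀ w ∈ S, G.Adj z w → ∃ i < k + 1, P i = w := by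
    by_contra hno
    push Not at hno
    obtain ⟨w, hw, hzw, hne⟩ := hno
    obtain ⟨Q, hQ, hzQ, ⟨a, ha, hza', i, hi, hPi⟩, ⟨b, hb, hzb', hPb⟩⟩ := h.rot z hzS
      (fun w => ∃ i < k + 1, P i = w) ⟨P 0, PS 0, zP 0, 0, by omega, rfl⟩
      ⟨w, hw, hzw, by push Not; exact hne⟩
    push Not at hPb
    have hcase : ∃ j < k + 1, Q = R j := by
      rcases Nat.eq_zero_or_pos i with rfl | hpos
      · rcases h.fac2 (RF k) (RF 0) hQ (zP 0) (zR _) (zR _) hzQ hk0 (PR 0) (hPi ▸ ha) hR0 with e | e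
        · exact ⟨k, by omega, e⟩
        · exact ⟨0, by omega, e⟩
      · obtain ⟨l, rfl⟩ : ∃ l, i = l + 1 := ⟨i - 1, by omega⟩
        rcases h.fac2 (RF (l + 1)) (RF l) hQ (zP (l + 1)) (zR _) (zR _) hzQ (PR _) (PR' _)
          (hPi ▸ ha) (Rne l) with e | e
        · exact ⟨_, hi, e⟩
        · exact ⟨l, by omega, e⟩
    obtain ⟨j, hj, rfl⟩ := hcase
    rcases h.deg2 (RF j) (zR _) (PR' j) (PR _) hb (zP _) (zP _) hzb' (Pne _) with e1 | e1
    · rcases Nat.lt_or_ge (j + 1) (k + 1) with hl | hl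
      · exact hPb _ hl e1.symm
      · have : j = k := by omega
        subst this
        exact hPb 0 (by omega) (hPm.trans e1.symm)
    · exact hPb _ hj e1.symm
  have hk3 : 3 ≤ k + 1 := by
    have : ({a0, b0, c0} : Finset V) ⊆ (Finset.range (k + 1)).image P := by
      intro w hw
      simp only [Finset.mem_insert, Finset.mem_singleton] at hw
      rw [Finset.mem_image]
      rcases hw with rfl | rfl | rfl
      · obtain ⟨i, hi, e⟩ := hcov _ ha0 hza; exact ⟨i, by simpa using hi, e⟩
      · obtain ⟨i, hi, e⟩ := hcov _ hb0 hzb; exact ⟨i, by simpa using hi, e⟩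
      · obtain ⟨i, hi, e⟩ := hcov _ hc0 hzc; exact ⟨i, by simpa using hi, e⟩
    have h1 := Finset.card_le_card this
    rw [Finset.card_eq_three.2 ⟨a0, b0, c0, hab0, hac0, hbc0, rfl⟩] at h1
    have h2 := Finset.card_image_le (s := Finset.range (k + 1)) (f := P)
    rw [Finset.card_range] at h2
    omega
  refine ⟨k + 1, fun i => P (i % (k + 1)), fun i => R (i % (k + 1)), hk3, ?_, ?_, fun i => RF _,
    fun i => zR _, fun i => PR _, ?_, fun i => zP _, ?_, ?_⟩
  · intro i; simp only [Nat.add_mod_right]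
  · intro i; simp only [Nat.add_mod_right]
  · intro i
    have hl : i % (k + 1) < k + 1 := Nat.mod_lt _ (by omega)
    rcases Nat.lt_or_ge (i % (k + 1) + 1) (k + 1) with hl2 | hl2
    · have : (i + 1) % (k + 1) = i % (k + 1) + 1 := by
        rw [Nat.add_mod, Nat.mod_eq_of_lt (a := 1) (by omega), Nat.mod_eq_of_lt hl2]
      simp only [this]
      exact PR' _
    · have e : i % (k + 1) = k := by omega
      have : (i + 1) % (k + 1) = 0 := by
        rw [Nat.add_mod, Nat.mod_eq_of_lt (a := 1) (by omega), e, Nat.mod_self]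
      simp only [this, e]
      exact hk0
  · intro w hw hzw
    obtain ⟨i, hi, e⟩ := hcov w hw hzw
    exact ⟨i, by simp only [Nat.mod_eq_of_lt hi]; exact e⟩
  · intro i j e
    exact hinj _ (Nat.mod_lt _ (by omega)) _ (Nat.mod_lt _ (by omega)) e

namespace Enum

theorem shift {G : SimpleGraph V} {S : Finset V} {F : Finset (Finset V)} {z : V} {n : ℕ}
    {p : ℕ → V} {q : ℕ → Finset V} (h : Enum G S F z n p q) (k : ℕ) :
    Enum G S F z n (fun i => p (k + i)) (fun i => q (k + i)) where
  n3 := h.n3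
  pn := fun i => (congrArg p (add_assoc k i n).symm).trans (h.pn (k + i))
  qn := fun i => (congrArg q (add_assoc k i n).symm).trans (h.qn (k + i))
  qF := fun i => h.qF _
  zq := fun i => h.zq _
  pq := fun i => h.pq _
  pq' := fun i => h.pq' (k + i)
  pz := fun i => h.pz _
  cov := by
    intro w hw hzw
    obtain ⟨i, hi⟩ := h.cov w hw hzw
    refine ⟨i + (n - 1) * k, ?_⟩
    have e : k + (i + (n - 1) * k) = i + k * n := by
      have := h.n3
      obtain ⟨m, rfl⟩ : ∃ m, n = m + 1 := ⟨n - 1, by omega⟩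
      simp only [Nat.add_sub_cancel]
      ring
    have hp : Function.Periodic p n := h.pn
    simp only [e]
    rw [← hi]
    exact hp.nat_mul k i
  inj := fun i j e => Nat.ModEq.add_left_cancel' k (h.inj _ _ e)

variable {G : SimpleGraph V} {S : Finset V} {F : Finset (Finset V)} {z : V} {n : ℕ}
    {p : ℕ → V} {q : ℕ → Finset V}

theorem cov_lt (h : Enum G S F z n p q) {w : V} (hw : w ∈ S) (hzw : G.Adj z w) :
    ∃ i < n, p i = w := by
  obtain ⟨i, hi⟩ := h.cov w hw hzw
  have hp : Function.Periodic p n := h.pn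
  exact ⟨i % n, Nat.mod_lt _ (by have := h.n3; omega), by rw [hp.map_mod_nat]; exact hi⟩

theorem inj_lt (h : Enum G S F z n p q) {i j : ℕ} (hi : i < n) (hj : j < n) (e : p i = p j) :
    i = j := (h.inj i j e).eq_of_lt_of_lt hi hj

theorem pne (h : Enum G S F z n p q) (i : ℕ) : p i ≠ p (i + 1) := by
  intro e
  have := (h.shift i).inj_lt (i := 0) (j := 1) (by have := h.n3; omega) (by have := h.n3; omega) e
  omega

/-- the neighbours of `z` in `q i` -/
theorem nbq (c : Cert G S F) (h : Enum G S F z n p q) {i : ℕ} {w : V} (hw : w ∈ q i)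
    (hzw : G.Adj z w) : w = p i ∨ w = p (i + 1) :=
  c.deg2 (h.qF i) (h.zq i) (h.pq i) (h.pq' i) hw (h.pz _) (h.pz _) hzw (h.pne i)

theorem q_inj (c : Cert G S F) (h : Enum G S F z n p q) {i j : ℕ} (e : q i = q j) :
    i ≡ j [MOD n] := by
  have hn := h.n3
  have h1 := h.nbq c (i := j) (w := p i) (e ▸ h.pq i) (h.pz i)
  have h2 := h.nbq c (i := j) (w := p (i + 1)) (e ▸ h.pq' i) (h.pz _)
  rcases h1 with h1 | h1
  · exact h.inj _ _ h1
  · rcases h2 with h2 | h2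
    · have g1 := h.inj _ _ h1
      have g2 := h.inj _ _ h2
      exfalso
      have g3 : j + 1 + 1 ≡ j [MOD n] := (g1.add_right 1).symm.trans g2
      have : 2 ≡ 0 [MOD n] := Nat.ModEq.add_left_cancel' j g3
      have := this.eq_of_lt_of_lt (by omega) (by omega)
      omega
    · exact Nat.ModEq.add_right_cancel' 1 (h.inj _ _ h2)

theorem q_inj_lt (c : Cert G S F) (h : Enum G S F z n p q) {i j : ℕ} (hi : i < n) (hj : j < n)
    (e : q i = q j) : i = j := (h.q_inj c e).eq_of_lt_of_lt hi hj

theorem qne (c : Cert G S F) (h : Enum G S F z n p q) (i : ℕ) : q i ≠ q (i + 1) := by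
  intro e
  have := (h.shift i).q_inj_lt c (i := 0) (j := 1) (by have := h.n3; omega)
    (by have := h.n3; omega) e
  omega

/-- the faces containing `z` and `p (i+1)` -/
theorem fcp (c : Cert G S F) (h : Enum G S F z n p q) {i : ℕ} {Q : Finset V} (hQ : Q ∈ F)
    (hz : z ∈ Q) (hp : p (i + 1) ∈ Q) : Q = q i ∨ Q = q (i + 1) :=
  c.fac2 (h.qF i) (h.qF (i + 1)) hQ (h.pz (i + 1)) (h.zq _) (h.zq _) hz (h.pq' i) (h.pq _) hp
    (h.qne c i)

theorem fcp0 (c : Cert G S F) (h : Enum G S F z n p q) {Q : Finset V} (hQ : Q ∈ F)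
    (hz : z ∈ Q) (hp : p 0 ∈ Q) : Q = q (n - 1) ∨ Q = q 0 := by
  have hn : n - 1 + 1 = 0 + n := by have := h.n3; omega
  have := h.fcp c (i := n - 1) hQ hz (by rw [hn, h.pn]; exact hp)
  rwa [hn, h.qn] at this

theorem qcov (c : Cert G S F) (h : Enum G S F z n p q) {Q : Finset V} (hQ : Q ∈ F) (hz : z ∈ Q) :
    ∃ i < n, Q = q i := by
  obtain ⟨a, ha, b, hb, hab, f1, f2, f3⟩ := c.deg Q hQ z hz
  have hn := h.n3
  obtain ⟨i, hi, rfl⟩ := h.cov_lt (c.sub Q hQ ha) f1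
  rcases Nat.eq_zero_or_pos i with rfl | hpos
  · rcases h.fcp0 c hQ hz ha with e | e
    · exact ⟨n - 1, by omega, e⟩
    · exact ⟨0, by omega, e⟩
  · obtain ⟨l, rfl⟩ : ∃ l, i = l + 1 := ⟨i - 1, by omega⟩
    rcases h.fcp c hQ hz ha with e | e
    · exact ⟨l, by omega, e⟩
    · exact ⟨_, hi, e⟩

theorem disj (c : Cert G S F) (h : Enum G S F z n p q) {i j : ℕ} {w : V}
    (hi : w ∈ ((q i).erase z).erase (p (i + 1))) (hj : w ∈ ((q j).erase z).erase (p (j + 1))) :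
    i ≡ j [MOD n] := by
  simp only [Finset.mem_erase] at hi hj
  by_cases hw : G.Adj z w
  · have h1 := (h.nbq c hi.2.2 hw).resolve_right hi.1
    have h2 := (h.nbq c hj.2.2 hw).resolve_right hj.1
    exact h.inj _ _ (h1.symm.trans h2)
  · exact h.q_inj c (c.nonedge z w (fun e => hi.2.1 e.symm) hw _ (h.qF i) _ (h.qF j) (h.zq _) hi.2.2
      (h.zq _) hj.2.2)

end Enum

/-- adjacency of two sets -/
def AJ (G : SimpleGraph V) (A B : Finset V) : Prop := ∃ a ∈ A, ∃ b ∈ B, G.Adj a b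

theorem AJ.symm {G : SimpleGraph V} {A B : Finset V} (h : AJ G A B) : AJ G B A := by
  obtain ⟨a, ha, b, hb, e⟩ := h
  exact ⟨b, hb, a, ha, e.symm⟩

theorem HM_K33 {G : SimpleGraph V} {S : Finset V} (A B : Fin 3 → Finset V)
    (hA : ∀ i, A i ⊆ S) (hB : ∀ i, B i ⊆ S) (cA : ∀ i, CS G (A i)) (cB : ∀ i, CS G (B i))
    (dA : ∀ i j, i < j → Disjoint (A i) (A j)) (dB : ∀ i j, i < j → Disjoint (B i) (B j))
    (dAB : ∀ i j, Disjoint (A i) (B j)) (aj : ∀ i j, AJ G (A i) (B j)) :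
    HM G S (completeBipartiteGraph (Fin 3) (Fin 3)) := by
  refine ⟨Sum.elim A B, ?_, ?_, ?_, ?_⟩
  · rintro (i | i)
    · exact hA i
    · exact hB i
  · rintro (i | i)
    · exact cA i
    · exact cB i
  · rintro (i | i) (j | j) hne
    · have hne : i ≠ j := fun e => hne (by rw [e])
      rcases lt_or_gt_of_ne hne with e | e
      · exact dA i j e
      · exact (dA j i e).symm
    · exact dAB i j
    · exact (dAB j i).symm
    · have hne : i ≠ j := fun e => hne (by rw [e])
      rcases lt_or_gt_of_ne hne with e | e
      · exact dB i j e
      · exact (dB j i e).symm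
  · rintro (i | i) (j | j) hadj
    · simp at hadj
    · exact aj i j
    · exact (aj j i).symm
    · simp at hadj

theorem HM_K5 {G : SimpleGraph V} {S : Finset V} (A : Fin 5 → Finset V)
    (hA : ∀ i, A i ⊆ S) (cA : ∀ i, CS G (A i))
    (dA : ∀ i j, i < j → Disjoint (A i) (A j)) (aj : ∀ i j, i < j → AJ G (A i) (A j)) :
    HM G S (completeGraph (Fin 5)) := by
  refine ⟨A, hA, cA, ?_, ?_⟩
  · intro i j hne
    rcases lt_or_gt_of_ne hne with e | e
    · exact dA i j e
    · exact (dA j i e).symm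
  · intro i j hne
    have hne : i ≠ j := by simpa using hne
    rcases lt_or_gt_of_ne hne with e | e
    · exact aj i j e
    · exact (aj j i e).symm

/-- `z` of `G'` arises by contracting `xy` in `G` -/
structure CT (G G' : SimpleGraph V) (U : Finset V) (x y z : V) : Prop where
  xU : x ∉ U
  yU : y ∉ U
  zU : z ∉ U
  xy : G.Adj x y
  gU : ∀ u ∈ U, ∀ v ∈ U, G'.Adj u v ↔ G.Adj u v
  gz : ∀ u ∈ U, G'.Adj z u ↔ G.Adj x u ∨ G.Adj y u

/-- the part of the face `q i` -/
def HH (z : V) (p : ℕ → V) (q : ℕ → Finset V) (i : ℕ) : Finset V := ((q i).erase z).erase (p (i + 1))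

/-- arcs around `z` -/
def arc (z : V) (p : ℕ → V) (q : ℕ → Finset V) (a b : ℕ) : Finset V :=
  (Finset.Ico a b).biUnion (HH z p q)

namespace CT

variable {G G' : SimpleGraph V} {U : Finset V} {F : Finset (Finset V)}
    {x y z : V} {n : ℕ} {p : ℕ → V} {q : ℕ → Finset V}

theorem memU (h : CT G G' U x y z) (c : Cert G' (insert z U) F) {Q : Finset V} (hQ : Q ∈ F) {w : V}
    (hw : w ∈ Q) (hz : w ≠ z) : w ∈ U := by
  have := c.sub Q hQ hw
  rw [Finset.mem_insert] at this
  exact this.resolve_left hz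

theorem pU (h : CT G G' U x y z) (c : Cert G' (insert z U) F)
    (e : Enum G' (insert z U) F z n p q) (i : ℕ) : p i ∈ U :=
  h.memU c (e.qF i) (e.pq i) (e.pz i).ne'

theorem HHU (h : CT G G' U x y z) (c : Cert G' (insert z U) F)
    (e : Enum G' (insert z U) F z n p q) (i : ℕ) : HH z p q i ⊆ U := by
  intro w hw
  simp only [HH, Finset.mem_erase] at hw
  exact h.memU c (e.qF i) hw.2.2 hw.2.1

theorem pHH (e : Enum G' (insert z U) F z n p q) (i : ℕ) : p i ∈ HH z p q i := by
  simp only [HH, Finset.mem_erase]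
  exact ⟨e.pne i, (e.pz i).ne', e.pq i⟩

theorem HH_CS (h : CT G G' U x y z) (c : Cert G' (insert z U) F)
    (e : Enum G' (insert z U) F z n p q) (i : ℕ) : CS G (HH z p q i) := by
  refine CS_congr ?_ (c.conn _ (e.qF i) z (e.zq i) _ (e.pq' i) (e.pz _))
  intro a ha b hb
  exact h.gU a (h.HHU c e i ha) b (h.HHU c e i hb)

theorem HH_AJ (h : CT G G' U x y z) (c : Cert G' (insert z U) F)
    (e : Enum G' (insert z U) F z n p q) (i : ℕ) : AJ G (HH z p q i) (HH z p q (i + 1)) := by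
  obtain ⟨a, ha, b, hb, hab, f1, f2, f3⟩ := c.deg _ (e.qF i) _ (e.pq' i)
  obtain ⟨w, hw, hwz, hpw⟩ : ∃ w ∈ q i, w ≠ z ∧ G'.Adj (p (i + 1)) w := by
    by_cases haz : a = z
    · exact ⟨b, hb, fun e => hab (haz.trans e.symm), f2⟩
    · exact ⟨a, ha, haz, f1⟩
  refine ⟨w, ?_, p (i + 1), pHH e _, ?_⟩
  · simp only [HH, Finset.mem_erase]
    exact ⟨hpw.ne', hwz, hw⟩
  · exact ((h.gU _ (h.pU c e _) _ (h.memU c (e.qF i) hw hwz)).1 hpw).symm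

theorem HH_per (e : Enum G' (insert z U) F z n p q) (i : ℕ) : HH z p q (i + n) = HH z p q i := by
  have : i + n + 1 = i + 1 + n := by omega
  simp only [HH, e.qn, this, e.pn]

theorem AJ_mono {A B A' B' : Finset V} (h : AJ G A B) (h1 : A ⊆ A') (h2 : B ⊆ B') : AJ G A' B' := by
  obtain ⟨a, ha, b, hb, e⟩ := h
  exact ⟨a, h1 ha, b, h2 hb, e⟩

theorem HH_arc {a b i : ℕ} (h1 : a ≤ i) (h2 : i < b) : HH z p q i ⊆ arc z p q a b :=
  Finset.subset_biUnion_of_mem (HH z p q) (Finset.mem_Ico.2 ⟨h1, h2⟩)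

theorem arc_U (h : CT G G' U x y z) (c : Cert G' (insert z U) F)
    (e : Enum G' (insert z U) F z n p q) (a b : ℕ) : arc z p q a b ⊆ U :=
  Finset.biUnion_subset.2 fun i _ => h.HHU c e i

theorem arc_CS (h : CT G G' U x y z) (c : Cert G' (insert z U) F)
    (e : Enum G' (insert z U) F z n p q) {a b : ℕ} (hab : a < b) : CS G (arc z p q a b) := by
  induction b, hab using Nat.le_induction with
  | base => simpa [arc] using h.HH_CS c e a
  | succ b hb ih =>
    have : arc z p q a (b + 1) = arc z p q a b ∪ HH z p q b := by
      ext w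
      simp only [arc, Finset.mem_biUnion, Finset.mem_Ico, Finset.mem_union]
      constructor
      · rintro ⟨i, hi, hw⟩
        by_cases hib : i = b
        · right; rwa [← hib]
        · left; exact ⟨i, by omega, hw⟩
      · rintro (⟨i, hi, hw⟩ | hw)
        · exact ⟨i, by omega, hw⟩
        · exact ⟨b, by omega, hw⟩
    rw [this]
    refine CS_union ih (h.HH_CS c e b) ?_
    obtain ⟨b, rfl⟩ : ∃ m, b = m + 1 := ⟨b - 1, by omega⟩
    exact AJ_mono (h.HH_AJ c e b) (HH_arc (by omega) (by omega)) (Finset.Subset.refl _)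

theorem arc_AJ (h : CT G G' U x y z) (c : Cert G' (insert z U) F)
    (e : Enum G' (insert z U) F z n p q) {a b d : ℕ} (hab : a < b) (hbd : b < d) :
    AJ G (arc z p q a b) (arc z p q b d) := by
  obtain ⟨b, rfl⟩ : ∃ m, b = m + 1 := ⟨b - 1, by omega⟩
  exact AJ_mono (h.HH_AJ c e b) (HH_arc (by omega) (by omega)) (HH_arc (by omega) (by omega))

theorem arc_disj (c : Cert G' (insert z U) F)
    (e : Enum G' (insert z U) F z n p q) {a b a' b' : ℕ} (h1 : b ≤ a') (h2 : b' ≤ n) :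
    Disjoint (arc z p q a b) (arc z p q a' b') := by
  rw [Finset.disjoint_left]
  intro w hw hw'
  simp only [arc, Finset.mem_biUnion, Finset.mem_Ico] at hw hw'
  obtain ⟨i, hi, hwi⟩ := hw
  obtain ⟨j, hj, hwj⟩ := hw'
  have := (e.disj c hwi hwj).eq_of_lt_of_lt (by omega) (by omega)
  omega

theorem sing_disj {A : Finset V} {v : V} (hv : v ∉ U) (hA : A ⊆ U) : Disjoint {v} A := by
  rw [Finset.disjoint_singleton_left]
  exact fun e => hv (hA e)

theorem no_cross (h : CT G G' U x y z) (c : Cert G' (insert z U) F)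
    (e : Enum G' (insert z U) F z n p q) {b d f : ℕ} (h0 : 0 < b) (h1 : b < d) (h2 : d < f)
    (h3 : f < n) (X0 : G.Adj x (p 0)) (Yb : G.Adj y (p b)) (Xd : G.Adj x (p d)) (Yf : G.Adj y (p f)) :
    HM G (insert x (insert y U)) (completeBipartiteGraph (Fin 3) (Fin 3)) := by
  have sU : U ⊆ insert x (insert y U) := by
    intro w hw; simp [hw]
  have aU := fun a b => h.arc_U c e a b
  have mem : ∀ {a b : ℕ}, a < b → p a ∈ arc z p q a b := fun hab =>
    HH_arc le_rfl hab (pHH e _)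
  have wrap : AJ G (arc z p q f n) (arc z p q 0 b) := by
    obtain ⟨m, rfl⟩ : ∃ m, n = m + 1 := ⟨n - 1, by omega⟩
    have := h.HH_AJ c e m
    have e2 := HH_per e 0
    rw [Nat.zero_add] at e2
    rw [e2] at this
    exact AJ_mono this (HH_arc (by omega) (by omega)) (HH_arc (by omega) (by omega))
  have hyx : y ∉ ({x} : Finset V) := by simpa using h.xy.ne'
  refine HM_K33 ![{x}, arc z p q b d, arc z p q f n] ![{y}, arc z p q 0 b, arc z p q d f] ?_ ?_ ?_ ?_
    ?_ ?_ ?_ ?_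
  · intro i; fin_cases i
    · simp
    · exact (aU _ _).trans sU
    · exact (aU _ _).trans sU
  · intro i; fin_cases i
    · simp
    · exact (aU _ _).trans sU
    · exact (aU _ _).trans sU
  · intro i; fin_cases i
    · exact CS_singleton G x
    · exact h.arc_CS c e h1
    · exact h.arc_CS c e h3
  · intro i; fin_cases i
    · exact CS_singleton G y
    · exact h.arc_CS c e h0
    · exact h.arc_CS c e h2
  · intro i j hij
    fin_cases i <;> fin_cases j <;> first | (exfalso; revert hij; decide) | skip
    · exact sing_disj h.xU (aU _ _)
    · exact sing_disj h.xU (aU _ _)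
    · exact arc_disj c e (by omega) (by omega)
  · intro i j hij
    fin_cases i <;> fin_cases j <;> first | (exfalso; revert hij; decide) | skip
    · exact sing_disj h.yU (aU _ _)
    · exact sing_disj h.yU (aU _ _)
    · exact arc_disj c e (by omega) (by omega)
  · intro i j
    fin_cases i <;> fin_cases j
    · exact (Finset.disjoint_singleton_right.2 hyx)
    · exact sing_disj h.xU (aU _ _)
    · exact sing_disj h.xU (aU _ _)
    · exact (sing_disj h.yU (aU _ _)).symm
    · exact (arc_disj c e (by omega) (by omega)).symm
    · exact arc_disj c e (by omega) (by omega)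
    · exact (sing_disj h.yU (aU _ _)).symm
    · exact (arc_disj c e (by omega) (by omega)).symm
    · exact (arc_disj c e (by omega) (by omega)).symm
  · intro i j
    fin_cases i <;> fin_cases j
    · exact ⟨x, by simp, y, by simp, h.xy⟩
    · exact ⟨x, by simp, p 0, mem h0, X0⟩
    · exact ⟨x, by simp, p d, mem h2, Xd⟩
    · exact ⟨p b, mem h1, y, by simp, Yb.symm⟩
    · exact (h.arc_AJ c e h0 h1).symm
    · exact h.arc_AJ c e h1 h2
    · exact ⟨p f, mem h3, y, by simp, Yf.symm⟩
    · exact wrap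
    · exact (h.arc_AJ c e h2 h3).symm

theorem no_K5 (h : CT G G' U x y z) (c : Cert G' (insert z U) F)
    (e : Enum G' (insert z U) F z n p q) (hn : n = 3) (X : ∀ i < 3, G.Adj x (p i))
    (Y : ∀ i < 3, G.Adj y (p i)) :
    HM G (insert x (insert y U)) (completeGraph (Fin 5)) := by
  subst hn
  have sU : U ⊆ insert x (insert y U) := by
    intro w hw; simp [hw]
  have aU := fun a b => h.arc_U c e a b
  have mem : ∀ {a b : ℕ}, a < b → p a ∈ arc z p q a b := fun hab =>
    HH_arc le_rfl hab (pHH e _)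
  have wrap : AJ G (arc z p q 2 3) (arc z p q 0 1) := by
    have := h.HH_AJ c e 2
    have e2 := HH_per e 0
    rw [Nat.zero_add] at e2
    rw [e2] at this
    exact AJ_mono this (HH_arc (by omega) (by omega)) (HH_arc (by omega) (by omega))
  have hyx : y ∉ ({x} : Finset V) := by simpa using h.xy.ne'
  refine HM_K5 ![{x}, {y}, arc z p q 0 1, arc z p q 1 2, arc z p q 2 3] ?_ ?_ ?_ ?_
  · intro i; fin_cases i
    · simp
    · simp
    · exact (aU _ _).trans sU
    · exact (aU _ _).trans sU
    · exact (aU _ _).trans sU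
  · intro i; fin_cases i
    · exact CS_singleton G x
    · exact CS_singleton G y
    · exact h.arc_CS c e (by omega)
    · exact h.arc_CS c e (by omega)
    · exact h.arc_CS c e (by omega)
  · intro i j hij
    fin_cases i <;> fin_cases j <;> first | (exfalso; revert hij; decide) | skip
    · exact (Finset.disjoint_singleton_right.2 hyx)
    · exact sing_disj h.xU (aU _ _)
    · exact sing_disj h.xU (aU _ _)
    · exact sing_disj h.xU (aU _ _)
    · exact sing_disj h.yU (aU _ _)
    · exact sing_disj h.yU (aU _ _)
    · exact sing_disj h.yU (aU _ _)
    · exact arc_disj c e (by omega) (by omega)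
    · exact arc_disj c e (by omega) (by omega)
    · exact arc_disj c e (by omega) (by omega)
  · intro i j hij
    fin_cases i <;> fin_cases j <;> first | (exfalso; revert hij; decide) | skip
    · exact ⟨x, by simp, y, by simp, h.xy⟩
    · exact ⟨x, by simp, p 0, mem (by omega), X 0 (by omega)⟩
    · exact ⟨x, by simp, p 1, mem (by omega), X 1 (by omega)⟩
    · exact ⟨x, by simp, p 2, mem (by omega), X 2 (by omega)⟩
    · exact ⟨y, by simp, p 0, mem (by omega), Y 0 (by omega)⟩
    · exact ⟨y, by simp, p 1, mem (by omega), Y 1 (by omega)⟩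
    · exact ⟨y, by simp, p 2, mem (by omega), Y 2 (by omega)⟩
    · exact h.arc_AJ c e (by omega) (by omega)
    · exact wrap.symm
    · exact h.arc_AJ c e (by omega) (by omega)

end CT

theorem exists_flip {X : ℕ → Prop} {j i : ℕ} (hj : ¬ X j) (hi : X (j + i)) :
    ∃ m, ¬ X m ∧ X (m + 1) := by
  by_contra hno
  push Not at hno
  have : ∀ i, ¬ X (j + i) := by
    intro i
    induction i with
    | zero => exact hj
    | succ i ih => exact hno _ ih
  exact this i hi

theorem selectXY {X Y : ℕ → Prop} {n : ℕ} (hn : 3 ≤ n) (Xn : ∀ i, X (i + n) ↔ X i)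
    (Yn : ∀ i, Y (i + n) ↔ Y i) (XY : ∀ i, X i ∨ Y i)
    (X2 : ∀ k, ∃ i, 0 < i ∧ i < n ∧ X (k + i)) (Y2 : ∀ k, ∃ i, 0 < i ∧ i < n ∧ Y (k + i))
    (nc : ∀ k b c d, 0 < b → b < c → c < d → d < n → X k → Y (k + b) → X (k + c) → ¬ Y (k + d))
    (h3 : n = 3 → ¬ ∀ i < 3, X i ∧ Y i) :
    ∃ k s, 1 ≤ s ∧ s < n ∧ (∀ i < n, X (k + i) ↔ i ≤ s) ∧ (∀ i < n, Y (k + i) → i = 0 ∨ s ≤ i) ∧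
      (s = n - 1 → Y k ∧ Y (k + s)) := by
  classical
  by_cases hX : ∃ j, ¬ X j
  · obtain ⟨j, hj⟩ := hX
    obtain ⟨i, _, _, hi⟩ := X2 j
    obtain ⟨m, hm, hm1⟩ := exists_flip hj hi
    obtain ⟨i, hi0, hin, hi⟩ := X2 (m + 1)
    have hlast : ¬ X (m + 1 + (n - 1)) := by
      have : m + 1 + (n - 1) = m + n := by omega
      rw [this, Xn]; exact hm
    have hlY : Y (m + 1 + (n - 1)) := (XY _).resolve_left hlast
    let s := Nat.findGreatest (fun i => X (m + 1 + i)) (n - 1)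
    have hs1 : X (m + 1 + s) := Nat.findGreatest_spec (P := fun i => X (m + 1 + i)) (m := i)
      (by omega) hi
    have hs2 : i ≤ s := Nat.le_findGreatest (by omega) hi
    have hs3 : s ≤ n - 1 := Nat.findGreatest_le _
    have hs4 : ∀ i, s < i → i ≤ n - 1 → ¬ X (m + 1 + i) := fun i h1 h2 =>
      Nat.findGreatest_is_greatest (P := fun i => X (m + 1 + i)) h1 h2
    clear_value s
    have hs5 : s ≠ n - 1 := by rintro rfl; exact hlast hs1
    have hmid : ∀ i, 0 < i → i < s → ¬ Y (m + 1 + i) := by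
      intro i h1 h2 h3
      exact nc (m + 1) i s (n - 1) h1 h2 (by omega) (by omega) hm1 h3 hs1 hlY
    refine ⟨m + 1, s, by omega, by omega, ?_, ?_, fun e => absurd e hs5⟩
    · intro i hi
      constructor
      · intro hXi
        by_contra hlt
        exact hs4 i (by omega) (by omega) hXi
      · intro his
        rcases Nat.eq_zero_or_pos i with rfl | hpos
        · exact hm1
        · rcases Nat.lt_or_ge i s with hl | hl
          · exact (XY _).resolve_right (hmid i hpos hl)
          · have : i = s := by omega
            rw [this]; exact hs1
    · intro i hi hY
      by_contra hcon
      push Not at hcon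
      exact hmid i (by omega) hcon.2 hY
  · push Not at hX
    have hY : ∃ j, ¬ Y j := by
      by_contra hno
      push Not at hno
      rcases Nat.lt_or_ge 3 n with hl | hl
      · exact nc 0 1 2 3 (by omega) (by omega) (by omega) hl (hX _) (hno _) (hX _) (hno _)
      · exact h3 (by omega) fun i _ => ⟨hX i, hno i⟩
    obtain ⟨j, hj⟩ := hY
    obtain ⟨i, _, _, hi⟩ := Y2 j
    obtain ⟨m, hm, hm1⟩ := exists_flip hj hi
    have key : ∀ t, 2 < t → t < n → ¬ Y (m + t) := by
      intro t ht htn hY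
      exact nc m 1 2 t (by omega) (by omega) (by omega) htn (hX _) hm1 (hX _) hY
    have hm2 : Y (m + 2) := by
      obtain ⟨i, hi0, hin, hi⟩ := Y2 (m + 1)
      rcases Nat.lt_or_ge 1 i with hl | hl
      · exfalso
        rcases Nat.lt_or_ge (i + 1) n with hl2 | hl2
        · refine key (i + 1) (by omega) hl2 ?_
          have : m + (i + 1) = m + 1 + i := by omega
          rwa [this]
        · have : m + 1 + i = m + n := by omega
          rw [this, Yn] at hi
          exact hm hi
      · have : i = 1 := by omega
        subst this
        exact hi
    refine ⟨m + 2, n - 1, by omega, by omega, ?_, ?_, ?_⟩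
    · intro i hi
      exact ⟨fun _ => by omega, fun _ => hX _⟩
    · intro i hi hY
      by_contra hcon
      push Not at hcon
      rcases Nat.lt_or_ge (i + 2) n with hl2 | hl2
      · refine key (i + 2) (by omega) hl2 ?_
        have : m + (i + 2) = m + 2 + i := by omega
        rwa [this]
      · have : m + 2 + i = m + n := by omega
        rw [this, Yn] at hY
        exact hm hY
    · intro _
      refine ⟨hm2, ?_⟩
      have : m + 2 + (n - 1) = m + 1 + n := by omega
      rw [this, Yn]
      exact hm1

theorem Enum.memix {G : SimpleGraph V} {S : Finset V} {F : Finset (Finset V)} {z : V} {n : ℕ}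
    {p : ℕ → V} {q : ℕ → Finset V} (c : Cert G S F) (e : Enum G S F z n p q) {i j : ℕ}
    (hi : i < n) (hj : j < n) : p j ∈ q i ↔ (j = i ∨ j = i + 1 ∨ (i = n - 1 ∧ j = 0)) := by
  have hn : ∀ i, i = n - 1 → p (i + 1) = p 0 := by
    intro i hi
    have : i + 1 = 0 + n := by omega
    rw [this, e.pn]
  constructor
  · intro hm
    rcases e.nbq c hm (e.pz j) with h1 | h1
    · exact Or.inl (e.inj_lt hj hi h1)
    · right
      rcases Nat.lt_or_ge (i + 1) n with hl | hl
      · exact Or.inl (e.inj_lt hj hl h1)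
      · have hin : i = n - 1 := by omega
        rw [hn i hin] at h1
        exact Or.inr ⟨hin, e.inj_lt hj (by omega) h1⟩
  · rintro (rfl | rfl | ⟨h1, rfl⟩)
    · exact e.pq _
    · exact e.pq' _
    · rw [← hn i h1]; exact e.pq' i

namespace CT

variable {G G' : SimpleGraph V} {U : Finset V} {F : Finset (Finset V)}
    {x y z : V} {n : ℕ} {p : ℕ → V} {q : ℕ → Finset V}

set_option maxHeartbeats 2000000 in
theorem build (h : CT G G' U x y z) (c : Cert G' (insert z U) F)
    (e : Enum G' (insert z U) F z n p q) {s : ℕ} (hs1 : 1 ≤ s) (hsn : s < n)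
    (hX : ∀ i < n, G.Adj x (p i) ↔ i ≤ s) (hY : ∀ i < n, G.Adj y (p i) → i = 0 ∨ s ≤ i)
    (hend : s = n - 1 → G.Adj y (p 0) ∧ G.Adj y (p s))
    (Y2 : ∃ i, i < n - 1 ∧ G.Adj y (p i)) : ∃ F', Cert G (insert x (insert y U)) F' := by
  classical
  have n3 := e.n3
  have pU := h.pU c e
  have pix : ∀ u ∈ U, (G.Adj x u ∨ G.Adj y u) → ∃ j < n, u = p j := by
    intro u hu ha
    obtain ⟨j, hj, rfl⟩ := e.cov_lt (w := u) (by simp [hu]) ((h.gz u hu).2 ha)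
    exact ⟨j, hj, rfl⟩
  have qix : ∀ Q ∈ F, z ∈ Q → ∃ i < n, Q = q i := fun Q hQ hz => e.qcov c hQ hz
  have hY2 : ∀ i < n, s < i → G.Adj y (p i) := by
    intro i hi hsi
    have := (h.gz _ (pU i)).1 (e.pz i)
    rw [hX i hi] at this
    exact this.resolve_left (by omega)
  have Y2' : G.Adj y (p 0) ∨ G.Adj y (p s) ∨ s + 1 < n - 1 := by
    obtain ⟨i, hi, hy⟩ := Y2
    rcases hY i (by omega) hy with rfl | hl
    · exact Or.inl hy
    · rcases Nat.lt_or_ge s i with h1 | h1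
      · right; right; omega
      · have : i = s := by omega
        subst this
        exact Or.inr (Or.inl hy)
  obtain ⟨cx, hcx⟩ : ∃ cx : ℕ → Prop, ∀ i, cx i ↔ (i < s ∨ (i = s ∧ ¬ G.Adj y (p s)) ∨
    (i = n - 1 ∧ ¬ G.Adj y (p 0))) := ⟨_, fun i => Iff.rfl⟩
  obtain ⟨hx, hxd⟩ : ∃ hx : Finset V → Prop, ∀ Q, hx Q ↔ ∃ i < n, Q = q i ∧ cx i :=
    ⟨_, fun i => Iff.rfl⟩
  obtain ⟨hy, hyd⟩ : ∃ hy : Finset V → Prop, ∀ Q, hy Q ↔ ∃ i < n, Q = q i ∧ s ≤ i :=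
    ⟨_, fun i => Iff.rfl⟩
  have hxq : ∀ i < n, (hx (q i) ↔ cx i) := by
    intro i hi
    rw [hxd]
    constructor
    · rintro ⟨j, hj, e1, e2⟩
      rwa [e.q_inj_lt c hi hj e1]
    · intro hc; exact ⟨i, hi, rfl, hc⟩
  have hyq : ∀ i < n, (hy (q i) ↔ s ≤ i) := by
    intro i hi
    rw [hyd]
    constructor
    · rintro ⟨j, hj, e1, e2⟩
      rwa [e.q_inj_lt c hi hj e1]
    · intro hc; exact ⟨i, hi, rfl, hc⟩
  have mx : ∀ i < n, ∀ j < n, (p j ∈ q i ↔ (j = i ∨ j = i + 1 ∨ (i = n - 1 ∧ j = 0))) :=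
    fun i hi j hj => e.memix c hi hj
  have hxm : ∀ Q ∈ F, x ∉ Q.erase z := by
    intro Q hQ hm
    rw [Finset.mem_erase] at hm
    exact h.xU (h.memU c hQ hm.2 hm.1)
  have hym : ∀ Q ∈ F, y ∉ Q.erase z := by
    intro Q hQ hm
    rw [Finset.mem_erase] at hm
    exact h.yU (h.memU c hQ hm.2 hm.1)
  have nxy := h.xy.ne
  obtain ⟨φ, hφ⟩ : ∃ φ : Finset V → Finset V, ∀ Q ∈ F, ∀ w, w ∈ φ Q ↔
      (w ∈ Q.erase z ∨ (w = x ∧ z ∈ Q ∧ hx Q) ∨ (w = y ∧ z ∈ Q ∧ hy Q)) := by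
    refine ⟨fun Q => Q.erase z ∪ ((if z ∈ Q ∧ hx Q then {x} else ∅) ∪
      (if z ∈ Q ∧ hy Q then {y} else ∅)), ?_⟩
    intro Q _ w
    simp only [Finset.mem_union]
    split_ifs with a b b <;> simp only [Finset.mem_singleton, Finset.notMem_empty] <;> tauto
  have hpj : ∀ j, p j ≠ z := fun j => (e.pz j).ne'
  have sd : SD G G' U F (F.image φ ∪ (U.filter fun u => G.Adj x u ∧ G.Adj y u).image
      fun u => ({x, y, u} : Finset V)) (F.filter fun Q => z ∈ Q ∧ hx Q ∧ hy Q)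
      (U.filter fun u => G.Adj x u ∧ G.Adj y u) x y z hx hy φ := by
    refine ⟨h.xU, h.yU, h.zU, h.xy, h.gU, h.gz, c, ?_, ?_, ?_, ?_, ?_, ?_, ?_, ?_, ?_, ?_, ?_, ?_,
      ?_, ?_, ?_, ?_, ?_, ?_, ?_⟩
    · -- P0
      intro Q hQ hz
      obtain ⟨i, hi, rfl⟩ := qix Q hQ hz
      rw [hxq i hi, hyq i hi, hcx]
      omega
    · -- P1
      intro u hu h1 h2 Q hQ hz hm
      obtain ⟨i, hi, rfl⟩ := qix Q hQ hz
      obtain ⟨j, hj, rfl⟩ := pix u hu (Or.inl h1)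
      rw [hX j hj] at h1
      rw [mx i hi j hj] at hm
      rw [hxq i hi, hcx]
      rcases hm with rfl | rfl | ⟨rfl, rfl⟩
      · rcases Nat.lt_or_ge j s with hl | hl
        · exact Or.inl hl
        · have : j = s := by omega
          subst this
          exact Or.inr (Or.inl ⟨rfl, h2⟩)
      · left; omega
      · exact Or.inr (Or.inr ⟨rfl, h2⟩)
    · -- P2
      intro u hu h1 h2 Q hQ hz hm
      obtain ⟨i, hi, rfl⟩ := qix Q hQ hz
      obtain ⟨j, hj, rfl⟩ := pix u hu (Or.inr h1)
      rw [hX j hj] at h2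
      rw [mx i hi j hj] at hm
      rw [hyq i hi]
      omega
    · -- P3
      intro u hu h1 h2
      obtain ⟨j, hj, rfl⟩ := pix u hu (Or.inl h1)
      have h1' := h1
      rw [hX j hj] at h1
      rcases hY j hj h2 with rfl | hl
      · refine ⟨q 0, e.qF _, q (n - 1), e.qF _, e.zq _, (mx _ (by omega) _ hj).2 (by omega), e.zq _,
          (mx _ (by omega) _ hj).2 (by omega), ?_⟩
        rw [hxq _ hj, hyq _ hj, hxq _ (by omega), hyq _ (by omega), hcx, hcx]
        refine ⟨Or.inl (by omega), by omega, by omega, ?_⟩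
        rintro (h3 | ⟨h3, h4⟩ | ⟨h3, h4⟩)
        · omega
        · exact h4 (hend h3.symm).2
        · exact h4 h2
      · have : j = s := by omega
        subst this
        refine ⟨q (j - 1), e.qF _, q j, e.qF _, e.zq _, (mx _ (by omega) _ hj).2 (by omega), e.zq _,
          (mx _ (by omega) _ hj).2 (by omega), ?_⟩
        rw [hxq _ (by omega), hyq _ (by omega), hxq _ hj, hyq _ hj, hcx, hcx]
        refine ⟨Or.inl (by omega), by omega, by omega, ?_⟩
        rintro (h3 | ⟨h3, h4⟩ | ⟨h3, h4⟩)
        · omega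
        · exact h4 h2
        · exact h4 (hend h3).1
    · -- P4
      intro Q hQ hz h1 u hu hzu
      obtain ⟨i, hi, rfl⟩ := qix Q hQ hz
      obtain ⟨j, hj, rfl⟩ := e.cov_lt (c.sub _ hQ hu) hzu
      rw [mx i hi j hj] at hu
      rw [hyq i hi] at h1
      rw [hX j hj]
      omega
    · -- P5
      intro Q hQ hz h1 u hu hzu
      obtain ⟨i, hi, rfl⟩ := qix Q hQ hz
      obtain ⟨j, hj, rfl⟩ := e.cov_lt (c.sub _ hQ hu) hzu
      rw [mx i hi j hj] at hu
      rw [hxq i hi, hcx] at h1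
      push Not at h1
      obtain ⟨g1, g2, g3⟩ := h1
      rcases hu with rfl | rfl | ⟨rfl, rfl⟩
      · rcases Nat.lt_or_ge s j with hl | hl
        · exact hY2 j hj hl
        · have : j = s := by omega
          rw [this]; exact g2 this
      · exact hY2 _ hj (by omega)
      · exact g3 rfl
    · -- P6
      intro Q hQ hz h1 h2
      obtain ⟨i, hi, rfl⟩ := qix Q hQ hz
      rw [hxq i hi, hcx] at h1
      rw [hyq i hi] at h2
      rcases h1 with h1 | ⟨rfl, h1⟩ | ⟨rfl, h1⟩
      · omega
      · have hne : i ≠ n - 1 := fun e => h1 (hend e).2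
        refine ⟨p i, e.pq i, p (i + 1), e.pq' i, pU _, pU _, (hX _ hi).2 le_rfl, h1,
          hY2 _ (by omega) (by omega), ?_⟩
        rw [hX _ (by omega)]; omega
      · have hne : s ≠ n - 1 := fun e => h1 (hend e).1
        refine ⟨p 0, (mx _ hi _ (by omega)).2 (by omega), p (n - 1), e.pq _, pU _, pU _,
          (hX _ (by omega)).2 (by omega), h1, hY2 _ (by omega) (by omega), ?_⟩
        rw [hX _ (by omega)]; omega
    · -- P7
      have eB : ∀ Q, Q ∈ (F.filter fun Q => z ∈ Q ∧ hx Q ∧ hy Q) ↔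
          (Q = q s ∧ ¬ G.Adj y (p s)) ∨ (Q = q (n - 1) ∧ ¬ G.Adj y (p 0)) := by
        intro Q
        rw [Finset.mem_filter]
        constructor
        · rintro ⟨hQ, hz, h1, h2⟩
          obtain ⟨i, hi, rfl⟩ := qix Q hQ hz
          rw [hxq i hi, hcx] at h1
          rw [hyq i hi] at h2
          rcases h1 with h1 | ⟨rfl, h1⟩ | ⟨rfl, h1⟩
          · omega
          · exact Or.inl ⟨rfl, h1⟩
          · exact Or.inr ⟨rfl, h1⟩
        · rintro (⟨rfl, h1⟩ | ⟨rfl, h1⟩)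
          · refine ⟨e.qF _, e.zq _, ?_⟩
            rw [hxq _ hsn, hyq _ hsn, hcx]
            exact ⟨Or.inr (Or.inl ⟨rfl, h1⟩), le_rfl⟩
          · refine ⟨e.qF _, e.zq _, ?_⟩
            rw [hxq _ (by omega), hyq _ (by omega), hcx]
            exact ⟨Or.inr (Or.inr ⟨rfl, h1⟩), by omega⟩
      have eZ : ∀ u, u ∈ (U.filter fun u => G.Adj x u ∧ G.Adj y u) ↔
          (u = p s ∧ G.Adj y (p s)) ∨ (u = p 0 ∧ G.Adj y (p 0)) := by
        intro u
        rw [Finset.mem_filter]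
        constructor
        · rintro ⟨hu, h1, h2⟩
          obtain ⟨j, hj, rfl⟩ := pix u hu (Or.inl h1)
          rw [hX j hj] at h1
          rcases hY j hj h2 with rfl | hl
          · exact Or.inr ⟨rfl, h2⟩
          · have : j = s := by omega
            subst this
            exact Or.inl ⟨rfl, h2⟩
        · rintro (⟨rfl, h1⟩ | ⟨rfl, h1⟩)
          · exact ⟨pU _, (hX _ hsn).2 le_rfl, h1⟩
          · exact ⟨pU _, (hX _ (by omega)).2 (by omega), h1⟩
      have nps : p s ≠ p 0 := fun e1 => by
        have := e.inj_lt hsn (by omega) e1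
        omega
      by_cases g1 : G.Adj y (p s) <;> by_cases g2 : G.Adj y (p 0)
      · have b1 : (F.filter fun Q => z ∈ Q ∧ hx Q ∧ hy Q) = ∅ := by
          ext Q; rw [eB]; simp [g1, g2]
        have b2 : (U.filter fun u => G.Adj x u ∧ G.Adj y u) = {p s, p 0} := by
          ext u; rw [eZ]; simp [g1, g2]
        rw [b1, b2, Finset.card_pair nps]; rfl
      · have b1 : (F.filter fun Q => z ∈ Q ∧ hx Q ∧ hy Q) = {q (n - 1)} := by
          ext Q; rw [eB]; simp [g1, g2]
        have b2 : (U.filter fun u => G.Adj x u ∧ G.Adj y u) = {p s} := by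
          ext u; rw [eZ]; simp [g1, g2]
        rw [b1, b2]; rfl
      · have b1 : (F.filter fun Q => z ∈ Q ∧ hx Q ∧ hy Q) = {q s} := by
          ext Q; rw [eB]; simp [g1, g2]
        have b2 : (U.filter fun u => G.Adj x u ∧ G.Adj y u) = {p 0} := by
          ext u; rw [eZ]; simp [g1, g2]
        rw [b1, b2]; rfl
      · have hne : s ≠ n - 1 := fun e => g1 (hend e).2
        have nq : q s ≠ q (n - 1) := fun e1 => hne (e.q_inj_lt c hsn (by omega) e1)
        have b1 : (F.filter fun Q => z ∈ Q ∧ hx Q ∧ hy Q) = {q s, q (n - 1)} := by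
          ext Q; rw [eB]; simp [g1, g2]
        have b2 : (U.filter fun u => G.Adj x u ∧ G.Adj y u) = ∅ := by
          ext u; rw [eZ]; simp [g1, g2]
        rw [b1, b2, Finset.card_pair nq]; rfl
    · -- P8
      intro u hu h1 h2 Q1 hQ1 Q2 hQ2 hz1 hm1 hz2 hm2 k1 k2
      obtain ⟨i1, hi1, rfl⟩ := qix Q1 hQ1 hz1
      obtain ⟨i2, hi2, rfl⟩ := qix Q2 hQ2 hz2
      obtain ⟨j, hj, rfl⟩ := pix u hu (Or.inr h1)
      rw [hX j hj] at h2
      rw [mx _ hi1 j hj] at hm1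
      rw [mx _ hi2 j hj] at hm2
      rw [hxq _ hi1, hcx] at k1
      rw [hxq _ hi2, hcx] at k2
      congr 1
      by_cases g1 : G.Adj y (p s) <;> by_cases g2 : G.Adj y (p 0) <;>
        simp only [g1, g2, not_true_eq_false, not_false_eq_true, and_false, and_true, or_false,
          false_or] at k1 k2 Y2' <;> omega
    · -- P9
      intro u hu h1 h2 Q1 hQ1 Q2 hQ2 hz1 hm1 hz2 hm2 k1 k2
      obtain ⟨i1, hi1, rfl⟩ := qix Q1 hQ1 hz1
      obtain ⟨i2, hi2, rfl⟩ := qix Q2 hQ2 hz2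
      obtain ⟨j, hj, rfl⟩ := pix u hu (Or.inl h1)
      rw [hX j hj] at h1
      rw [mx _ hi1 j hj] at hm1
      rw [mx _ hi2 j hj] at hm2
      rw [hyq _ hi1] at k1
      rw [hyq _ hi2] at k2
      congr 1
      omega
    · exact ⟨p 0, pU 0, (hX 0 (by omega)).2 (by omega)⟩
    · obtain ⟨i, hi, hyi⟩ := Y2
      exact ⟨p i, pU i, hyi⟩
    · intro u; rw [Finset.mem_filter]
    · intro Q; rw [Finset.mem_filter]
    · intro Q hQ w hw
      have w1 : w ≠ x := by rintro rfl; exact h.xU hw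
      have w2 : w ≠ y := by rintro rfl; exact h.yU hw
      have w3 : w ≠ z := by rintro rfl; exact h.zU hw
      rw [hφ Q hQ]
      simp [w1, w2, w3]
    · intro Q hQ
      rw [hφ Q hQ]
      simp [hxm Q hQ, nxy]
    · intro Q hQ
      rw [hφ Q hQ]
      simp [hym Q hQ, nxy.symm]
    · intro Q hQ w hw
      rw [hφ Q hQ] at hw
      rcases hw with hw | hw | hw
      · rw [Finset.mem_erase] at hw
        exact Or.inl (h.memU c hQ hw.2 hw.1)
      · exact Or.inr (Or.inl hw.1)
      · exact Or.inr (Or.inr hw.1)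
    · intro R
      simp only [Finset.mem_union, Finset.mem_image, Finset.mem_filter]
      constructor
      · rintro (⟨Q, hQ, rfl⟩ | ⟨u, ⟨hu, a, b⟩, rfl⟩)
        · exact Or.inl ⟨Q, hQ, rfl⟩
        · exact Or.inr ⟨u, hu, a, b, rfl⟩
      · rintro (⟨Q, hQ, rfl⟩ | ⟨u, hu, a, b, rfl⟩)
        · exact Or.inl ⟨Q, hQ, rfl⟩
        · exact Or.inr ⟨u, ⟨hu, a, b⟩, rfl⟩
  exact ⟨_, sd.cert⟩

end CT
theorem exists_avoid {S : Finset V} (a b c : V) (h : 4 ≤ S.card) :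
    ∃ w ∈ S, w ≠ a ∧ w ≠ b ∧ w ≠ c := by
  have h1 : ((S.erase a).erase b).erase c |>.Nonempty := by
    rw [← Finset.card_pos]
    have := Finset.pred_card_le_card_erase (s := S) (a := a)
    have := Finset.pred_card_le_card_erase (s := S.erase a) (a := b)
    have := Finset.pred_card_le_card_erase (s := (S.erase a).erase b) (a := c)
    omega
  obtain ⟨w, hw⟩ := h1
  simp only [Finset.mem_erase] at hw
  exact ⟨w, hw.2.2.2, hw.2.2.1, hw.2.1, hw.1⟩

theorem cert_base {G : SimpleGraph V} {S : Finset V} (h : C3 G S) (h4 : S.card = 4) :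
    Cert G S (S.image fun w => S.erase w) := by
  have two : ∀ u ∈ S, ∀ v ∈ S, u ≠ v → ∃ a b, a ≠ b ∧ (S.erase u).erase v = {a, b} := by
    intro u hu v hv huv
    have : ((S.erase u).erase v).card = 2 := by
      rw [Finset.card_erase_of_mem (by simp [hv, huv.symm]), Finset.card_erase_of_mem hu, h4]
    exact Finset.card_eq_two.1 this
  have comp : ∀ u ∈ S, ∀ v ∈ S, u ≠ v → G.Adj u v := by
    intro u hu v hv huv
    by_contra hn
    obtain ⟨a, b, hab, he⟩ := two u hu v hv huv
    have hm : ∀ w, w ∈ (S.erase u).erase v ↔ w = a ∨ w = b := by intro w; rw [he]; simp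
    simp only [Finset.mem_erase] at hm
    have ha := (hm a).2 (Or.inl rfl)
    have hb := (hm b).2 (Or.inr rfl)
    have := h.2 a ha.2.2 b hb.2.2 hab {u} (by simpa using hu) (by simp) (by simpa using ha.2.1)
      (by simpa using hb.2.1) (by
        intro u' hu' w hw hadj
        rw [Finset.mem_singleton] at hu'
        subst hu'
        right
        exact (hm w).1 ⟨fun e => hn (e ▸ hadj), hadj.ne', hw⟩) v hv
    rcases this with h1 | rfl | rfl
    · exact huv (Finset.mem_singleton.1 h1).symm
    · exact ha.1 rfl
    · exact hb.1 rfl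
  have inj : Set.InjOn (fun w => S.erase w) (S : Set V) := by
    intro a ha b hb hab
    by_contra hne
    have : b ∈ S.erase a := Finset.mem_erase.2 ⟨fun e => hne e.symm, hb⟩
    have hab : S.erase a = S.erase b := hab
    rw [hab] at this
    simp at this
  have cF : (S.image fun w => S.erase w).card = 4 := by
    rw [Finset.card_image_of_injOn inj, h4]
  refine ⟨?_, ?_, ?_, ?_, ?_, ?_, ?_, ?_⟩
  · intro Q hQ
    obtain ⟨w, hw, rfl⟩ := Finset.mem_image.1 hQ
    exact Finset.erase_subset _ _
  · intro Q hQ v hv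
    obtain ⟨w, hw, rfl⟩ := Finset.mem_image.1 hQ
    have hv' := Finset.mem_erase.1 hv
    obtain ⟨a, b, hab, he⟩ := two w hw v hv'.2 (fun e => hv'.1 e.symm)
    have hm : ∀ u, u ∈ (S.erase w).erase v ↔ u = a ∨ u = b := by intro u; rw [he]; simp
    have ha := Finset.mem_erase.1 ((hm a).2 (Or.inl rfl))
    have hb := Finset.mem_erase.1 ((hm b).2 (Or.inr rfl))
    refine ⟨a, ha.2, b, hb.2, hab, comp _ hv'.2 _ (Finset.mem_of_mem_erase ha.2) ha.1.symm,
      comp _ hv'.2 _ (Finset.mem_of_mem_erase hb.2) hb.1.symm, ?_⟩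
    intro c hc hadj
    exact (hm c).1 (Finset.mem_erase.2 ⟨hadj.ne', hc⟩)
  · intro u hu v hv huv
    obtain ⟨a, b, hab, he⟩ := two u hu v hv huv.ne
    have hm : ∀ w, w ∈ (S.erase u).erase v ↔ w = a ∨ w = b := by intro w; rw [he]; simp
    simp only [Finset.mem_erase] at hm
    have ha := (hm a).2 (Or.inl rfl)
    have hb := (hm b).2 (Or.inr rfl)
    refine ⟨S.erase a, Finset.mem_image_of_mem _ ha.2.2, S.erase b, Finset.mem_image_of_mem _ hb.2.2,
      fun e => hab (inj ha.2.2 hb.2.2 e), Finset.mem_erase.2 ⟨fun e => ha.2.1 e.symm, hu⟩,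
      Finset.mem_erase.2 ⟨fun e => ha.1 e.symm, hv⟩,
      Finset.mem_erase.2 ⟨fun e => hb.2.1 e.symm, hu⟩,
      Finset.mem_erase.2 ⟨fun e => hb.1 e.symm, hv⟩, ?_⟩
    intro Q hQ huQ hvQ
    obtain ⟨w, hw, rfl⟩ := Finset.mem_image.1 hQ
    rw [Finset.mem_erase] at huQ hvQ
    rcases (hm w).1 ⟨fun e => hvQ.1 e.symm, fun e => huQ.1 e.symm, hw⟩ with rfl | rfl
    · exact Or.inl rfl
    · exact Or.inr rfl
  · intro u v huv hn Q₁ hQ₁ Q₂ hQ₂ hu hv _ _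
    obtain ⟨w, hw, rfl⟩ := Finset.mem_image.1 hQ₁
    exact absurd (comp u (Finset.mem_of_mem_erase hu) v (Finset.mem_of_mem_erase hv) huv) hn
  · rintro v hv P ⟨a, ha, hva, hPa⟩ ⟨b, hb, hvb, hPb⟩
    obtain ⟨w, hw, h1, h2, h3⟩ := exists_avoid v a b h4.ge
    exact ⟨S.erase w, Finset.mem_image_of_mem _ hw, Finset.mem_erase.2 ⟨h1.symm, hv⟩,
      ⟨a, Finset.mem_erase.2 ⟨h2.symm, ha⟩, hva, hPa⟩, ⟨b, Finset.mem_erase.2 ⟨h3.symm, hb⟩, hvb, hPb⟩⟩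
  · intro Q hQ u hu v hv huv
    obtain ⟨w, hw, rfl⟩ := Finset.mem_image.1 hQ
    have : (((S.erase w).erase u).erase v).card = 1 := by
      rw [Finset.card_erase_of_mem (Finset.mem_erase.2 ⟨huv.ne', hv⟩), Finset.card_erase_of_mem hu,
        Finset.card_erase_of_mem hw, h4]
    obtain ⟨a, ha⟩ := Finset.card_eq_one.1 this
    rw [ha]
    exact CS_singleton G a
  · rw [cF, Finset.sum_image inj, Finset.sum_congr rfl
      (fun w hw => Finset.card_erase_of_mem hw), Finset.sum_const, h4]
    norm_num
  · intro Q hQ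
    obtain ⟨w, hw, rfl⟩ := Finset.mem_image.1 hQ
    rw [← Finset.card_pos, Finset.card_erase_of_mem hw, h4]
    norm_num

theorem exists_cert (n : ℕ) : ∀ (G : SimpleGraph V) (S : Finset V), S.card = n → C3 G S →
    ¬ HM G S (completeGraph (Fin 5)) → ¬ HM G S (completeBipartiteGraph (Fin 3) (Fin 3)) →
    ∃ F, Cert G S F := by
  induction n with
  | zero =>
    intro G S hn h
    exact absurd h.1 (by omega)
  | succ n ih =>
    intro G S hn h k5 k33
    have h4 := h.1
    by_cases h4' : S.card = 4
    · exact ⟨_, cert_base h h4'⟩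
    obtain ⟨x, hx, y, hy, hxy, h'⟩ := exists_contractible h (by omega)
    have hU : insert x ((S.erase y).erase x) = S.erase y :=
      Finset.insert_erase (Finset.mem_erase.2 ⟨hxy.ne, hx⟩)
    have hS : insert x (insert y ((S.erase y).erase x)) = S := by
      rw [Finset.insert_comm, hU, Finset.insert_erase hy]
    obtain ⟨F, c⟩ := ih (ctr G x y) (S.erase y) (by rw [Finset.card_erase_of_mem hy]; omega) h'
      (fun hm => k5 (HM_unctr hxy hx hy hm)) (fun hm => k33 (HM_unctr hxy hx hy hm))
    obtain ⟨m, p, q, e⟩ := exists_enum c (z := x) (Finset.mem_erase.2 ⟨hxy.ne, hx⟩)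
      (C3_deg h' (Finset.mem_erase.2 ⟨hxy.ne, hx⟩))
    have ct : CT G (ctr G x y) ((S.erase y).erase x) x y x := by
      refine ⟨by simp, by simp, by simp, hxy, ?_, ?_⟩
      · intro u hu v hv
        rw [ctr_adj]
        have hu' := (Finset.mem_erase.1 hu).1
        have hv' := (Finset.mem_erase.1 hv).1
        constructor
        · rintro ⟨_, h1 | h1 | h1⟩
          · exact h1
          · exact absurd h1.1 hu'
          · exact absurd h1.1 hv'
        · exact fun h1 => ⟨h1.ne, Or.inl h1⟩
      · intro u hu
        have hu' := (Finset.mem_erase.1 hu).1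
        rw [ctr_adj]
        constructor
        · rintro ⟨_, h1 | h1 | h1⟩
          · exact Or.inl h1
          · exact Or.inr h1.2
          · exact absurd h1.1 hu'
        · rintro (h1 | h1)
          · exact ⟨h1.ne, Or.inl h1⟩
          · exact ⟨hu'.symm, Or.inr (Or.inl ⟨rfl, h1⟩)⟩
    rw [← hU] at c e
    rw [← hS] at k5 k33
    rw [← hS]
    have n3 := e.n3
    have pU := ct.pU c e
    have pick : ∀ v ∈ S, ∀ a b : V, ∃ w ∈ S, G.Adj v w ∧ w ≠ a ∧ w ≠ b := by
      intro v hv a b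
      obtain ⟨a1, h1, a2, h2, a3, h3, n1, n2, n3, e1, e2, e3⟩ := C3_deg h hv
      by_cases t1 : a1 = a ∨ a1 = b
      · by_cases t2 : a2 = a ∨ a2 = b
        · refine ⟨a3, h3, e3, ?_, ?_⟩
          · rintro rfl
            rcases t1 with t1 | t1
            · exact n2 t1
            · rcases t2 with t2 | t2
              · exact n3 t2
              · exact n1 (t1.trans t2.symm)
          · rintro rfl
            rcases t1 with t1 | t1
            · rcases t2 with t2 | t2
              · exact n1 (t1.trans t2.symm)
              · exact n3 t2
            · exact n2 t1
        · rw [not_or] at t2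
          exact ⟨a2, h2, e2, t2⟩
      · rw [not_or] at t1
        exact ⟨a1, h1, e1, t1⟩
    have loc : ∀ k w, w ∈ S → w ≠ x → w ≠ y → (G.Adj x w ∨ G.Adj y w) → w ≠ p k →
        ∃ i, 0 < i ∧ i < m ∧ p (k + i) = w := by
      intro k w hw hwx hwy ha hk
      have hwU : w ∈ (S.erase y).erase x := by simp [hw, hwx, hwy]
      obtain ⟨i, hi, hi'⟩ := (e.shift k).cov_lt (w := w) (by simp [hw, hwx, hwy])
        ((ct.gz w hwU).2 ha)
      refine ⟨i, Nat.pos_of_ne_zero ?_, hi, hi'⟩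
      rintro rfl
      exact hk hi'.symm
    have X2 : ∀ k, ∃ i, 0 < i ∧ i < m ∧ G.Adj x (p (k + i)) := by
      intro k
      obtain ⟨w, hw, ha, h1, h2⟩ := pick x hx y (p k)
      obtain ⟨i, i0, im, hi⟩ := loc k w hw ha.ne' h1 (Or.inl ha) h2
      exact ⟨i, i0, im, hi ▸ ha⟩
    have Y2 : ∀ k, ∃ i, 0 < i ∧ i < m ∧ G.Adj y (p (k + i)) := by
      intro k
      obtain ⟨w, hw, ha, h1, h2⟩ := pick y hy x (p k)
      obtain ⟨i, i0, im, hi⟩ := loc k w hw h1 ha.ne' (Or.inr ha) h2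
      exact ⟨i, i0, im, hi ▸ ha⟩
    obtain ⟨k, s, s1, sn, hX, hY, hend⟩ := selectXY (X := fun i => G.Adj x (p i))
      (Y := fun i => G.Adj y (p i)) n3 (fun i => by simp only [e.pn]) (fun i => by simp only [e.pn])
      (fun i => (ct.gz _ (pU i)).1 (e.pz i)) X2 Y2
      (fun k b c' d h0 h1 h2 h3 x1 y1 x2 y2 => k33 (ct.no_cross c (e.shift k) h0 h1 h2 h3 x1 y1 x2 y2))
      (fun hm hall => k5 (ct.no_K5 c e hm (fun i hi => (hall i hi).1) (fun i hi => (hall i hi).2)))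
    refine ct.build c (e.shift k) s1 sn hX hY hend ?_
    obtain ⟨i, i0, im, hi⟩ := Y2 (k + (m - 1))
    refine ⟨i - 1, by omega, ?_⟩
    have : k + (m - 1) + i = k + (i - 1) + m := by omega
    rw [this, e.pn] at hi
    exact hi


/-- total weight inside `S` -/
def fw (w : V → V → ℕ) (S : Finset V) : ℕ := ∑ u ∈ S, ∑ v ∈ S, w u v

theorem fw_triple {w : V → V → ℕ} (w0 : ∀ u, w u u = 0)
    (h3 : ∀ a b c, a ≠ b → a ≠ c → b ≠ c →
      w a b + w b a + (w a c + w c a) + (w b c + w c b) ≤ 6)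
    {S : Finset V} (hS : S.card = 3) : fw w S ≤ 6 := by
  obtain ⟨a, b, c, hab, hac, hbc, rfl⟩ := Finset.card_eq_three.1 hS
  have := h3 a b c hab hac hbc
  unfold fw
  have e : ∀ g : V → ℕ, ∑ u ∈ ({a, b, c} : Finset V), g u = g a + (g b + g c) := by
    intro g
    rw [Finset.sum_insert (by simp [hab, hac]), Finset.sum_insert (by simp [hbc]),
      Finset.sum_singleton]
  simp only [e, w0]
  omega

theorem fw_face {G : SimpleGraph V} {w : V → V → ℕ} (wa : ∀ u v, ¬ G.Adj u v → w u v = 0)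
    (h2 : ∀ u v, w u v + w v u ≤ 3) {S : Finset V} {F : Finset (Finset V)} (c : Cert G S F)
    {Q : Finset V} (hQ : Q ∈ F) : fw w Q ≤ 3 * Q.card := by
  have hs : fw w Q = ∑ u ∈ Q, ∑ v ∈ Q, w v u := by
    unfold fw; exact Finset.sum_comm
  have h6 : fw w Q + fw w Q ≤ ∑ u ∈ Q, 6 := by
    nth_rewrite 2 [hs]
    unfold fw
    rw [← Finset.sum_add_distrib]
    refine Finset.sum_le_sum fun u hu => ?_
    rw [← Finset.sum_add_distrib]
    obtain ⟨a, ha, b, hb, hab, h1, h1', hall⟩ := c.deg Q hQ u hu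
    calc ∑ v ∈ Q, (w u v + w v u) = ∑ v ∈ ({a, b} : Finset V), (w u v + w v u) := by
          symm
          refine Finset.sum_subset ?_ ?_
          · intro t ht
            simp only [Finset.mem_insert, Finset.mem_singleton] at ht
            rcases ht with rfl | rfl
            · exact ha
            · exact hb
          · intro t ht hn
            simp only [Finset.mem_insert, Finset.mem_singleton] at hn
            have : ¬ G.Adj u t := fun h => hn (hall t ht h)
            have h7 : ¬ G.Adj t u := fun h => this h.symm
            simp [wa _ _ this, wa _ _ h7]
      _ ≤ 6 := by
          rw [Finset.sum_pair hab]
          have := h2 u a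
          have := h2 u b
          omega
  rw [Finset.sum_const, smul_eq_mul] at h6
  omega

theorem fw_double {G : SimpleGraph V} {w : V → V → ℕ} (wa : ∀ u v, ¬ G.Adj u v → w u v = 0)
    {S : Finset V} {F : Finset (Finset V)} (c : Cert G S F) :
    2 * fw w S ≤ ∑ Q ∈ F, fw w Q := by
  have e : ∑ Q ∈ F, fw w Q = ∑ u ∈ S, ∑ v ∈ S, ∑ Q ∈ F, if u ∈ Q ∧ v ∈ Q then w u v else 0 := by
    rw [Finset.sum_congr rfl (g := fun u => ∑ Q ∈ F, ∑ v ∈ S, if u ∈ Q ∧ v ∈ Q then w u v else 0)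
      (fun u _ => Finset.sum_comm), Finset.sum_comm]
    refine Finset.sum_congr rfl fun Q hQ => ?_
    have hs := c.sub Q hQ
    unfold fw
    rw [← Finset.sum_subset hs]
    · refine Finset.sum_congr rfl fun u hu => ?_
      rw [← Finset.sum_subset hs]
      · refine Finset.sum_congr rfl fun v hv => ?_
        rw [if_pos ⟨hu, hv⟩]
      · intro v _ hv
        rw [if_neg (fun h => hv h.2)]
    · intro u _ hu
      refine Finset.sum_eq_zero fun v _ => ?_
      rw [if_neg (fun h => hu h.1)]
  rw [e]
  unfold fw
  rw [Finset.mul_sum]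
  refine Finset.sum_le_sum fun u hu => ?_
  rw [Finset.mul_sum]
  refine Finset.sum_le_sum fun v hv => ?_
  by_cases hadj : G.Adj u v
  · obtain ⟨Q₁, hQ₁, Q₂, hQ₂, hne, e1, e2, e3, e4, -⟩ := c.edge u hu v hv hadj
    calc 2 * w u v = ∑ Q ∈ ({Q₁, Q₂} : Finset (Finset V)), if u ∈ Q ∧ v ∈ Q then w u v else 0 := by
          rw [Finset.sum_pair hne, if_pos ⟨e1, e2⟩, if_pos ⟨e3, e4⟩, two_mul]
      _ ≤ _ := by
          refine Finset.sum_le_sum_of_subset ?_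
          intro t ht
          simp only [Finset.mem_insert, Finset.mem_singleton] at ht
          rcases ht with rfl | rfl
          · exact hQ₁
          · exact hQ₂
  · rw [wa _ _ hadj]
    exact Nat.zero_le _

theorem HM.mono {W : Type*} {G : SimpleGraph V} {S S' : Finset V} {H : SimpleGraph W}
    (hs : S ⊆ S') (h : HM G S H) : HM G S' H := by
  obtain ⟨f, h1, h2⟩ := h
  exact ⟨f, fun w => (h1 w).trans hs, h2⟩

theorem fw_split {G : SimpleGraph V} {w : V → V → ℕ} (wa : ∀ u v, ¬ G.Adj u v → w u v = 0)
    {S C : Finset V} {a b : V} (hC : C ⊆ S)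
    (hcl : ∀ u ∈ C, ∀ v ∈ S, G.Adj u v → v ∈ C ∨ v = a ∨ v = b) (ha : a ∈ S) (hb : b ∈ S) :
    fw w S ≤ fw w (insert a (insert b C)) + fw w (S \ C) := by
  have hS1 : insert a (insert b C) ⊆ S := by
    intro t ht
    simp only [Finset.mem_insert] at ht
    rcases ht with rfl | rfl | ht
    · exact ha
    · exact hb
    · exact hC ht
  have ext : ∀ R ⊆ S, fw w R = ∑ u ∈ S, ∑ v ∈ S, if u ∈ R ∧ v ∈ R then w u v else 0 := by
    intro R hs
    unfold fw
    rw [← Finset.sum_subset hs]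
    · refine Finset.sum_congr rfl fun u hu => ?_
      rw [← Finset.sum_subset hs]
      · refine Finset.sum_congr rfl fun v hv => ?_
        rw [if_pos ⟨hu, hv⟩]
      · intro v _ hv
        rw [if_neg (fun h => hv h.2)]
    · intro u _ hu
      refine Finset.sum_eq_zero fun v _ => ?_
      rw [if_neg (fun h => hu h.1)]
  rw [ext _ hS1, ext (S \ C) Finset.sdiff_subset, ← Finset.sum_add_distrib]
  unfold fw
  refine Finset.sum_le_sum fun u hu => ?_
  rw [← Finset.sum_add_distrib]
  refine Finset.sum_le_sum fun v hv => ?_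
  by_cases hadj : G.Adj u v
  · by_cases huC : u ∈ C
    · rw [if_pos (by
        have := hcl u huC v hv hadj
        simp only [Finset.mem_insert]
        tauto)]
      exact Nat.le_add_right _ _
    · by_cases hvC : v ∈ C
      · rw [if_pos (by
          have := hcl v hvC u hu hadj.symm
          simp only [Finset.mem_insert]
          tauto)]
        exact Nat.le_add_right _ _
      · rw [if_pos (c := u ∈ S \ C ∧ v ∈ S \ C) (by
          simp only [Finset.mem_sdiff]
          tauto)]
        exact Nat.le_add_left _ _
  · rw [wa _ _ hadj]
    exact Nat.zero_le _

theorem fw_bound {G : SimpleGraph V} {w : V → V → ℕ} (wa : ∀ u v, ¬ G.Adj u v → w u v = 0)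
    (h2 : ∀ u v, w u v + w v u ≤ 3)
    (h3 : ∀ a b c, a ≠ b → a ≠ c → b ≠ c →
      w a b + w b a + (w a c + w c a) + (w b c + w c b) ≤ 6) (n : ℕ) :
    ∀ S : Finset V, S.card = n → 3 ≤ S.card → ¬ HM G S (completeGraph (Fin 5)) →
    ¬ HM G S (completeBipartiteGraph (Fin 3) (Fin 3)) → fw w S + 12 ≤ 6 * S.card := by
  have w0 : ∀ u, w u u = 0 := fun u => wa u u (SimpleGraph.irrefl G)
  induction n using Nat.strong_induction_on with
  | _ n ih =>
    intro S hn hS3 k5 k33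
    by_cases h4 : S.card = 3
    · have := fw_triple w0 h3 h4
      omega
    by_cases hc : C3 G S
    · obtain ⟨F, c⟩ := exists_cert n G S hn hc k5 k33
      have d := fw_double wa c
      have hf : ∀ Q ∈ F, fw w Q + 12 ≤ 6 * Q.card := by
        intro Q hQ
        have q3 : 3 ≤ Q.card := by
          obtain ⟨v, hv⟩ := c.ne Q hQ
          obtain ⟨a, ha, b, hb, hab, h1, h1', -⟩ := c.deg Q hQ v hv
          have : ({v, a, b} : Finset V) ⊆ Q := by
            intro t ht
            simp only [Finset.mem_insert, Finset.mem_singleton] at ht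
            rcases ht with rfl | rfl | rfl
            · exact hv
            · exact ha
            · exact hb
          have h5 := Finset.card_le_card this
          rwa [Finset.card_eq_three.2 ⟨v, a, b, h1.ne, h1'.ne, hab, rfl⟩] at h5
        rcases Nat.eq_or_lt_of_le q3 with q3 | q3
        · have := fw_triple w0 h3 q3.symm
          omega
        · have := fw_face wa h2 c hQ
          omega
      have hsum := Finset.sum_le_sum hf
      rw [Finset.sum_add_distrib, Finset.sum_const, smul_eq_mul, ← Finset.mul_sum] at hsum
      have := c.count
      omega
    · have hc' : ∃ a ∈ S, ∃ b ∈ S, a ≠ b ∧ ∃ C ⊆ S, C.Nonempty ∧ a ∉ C ∧ b ∉ C ∧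
          (∀ u ∈ C, ∀ v ∈ S, G.Adj u v → v ∈ C ∨ v = a ∨ v = b) ∧
          ∃ v ∈ S, v ∉ C ∧ v ≠ a ∧ v ≠ b := by
        by_contra hno
        refine hc ⟨by omega, fun a ha b hb hab C hC hne haC hbC hcl v hv => ?_⟩
        by_contra hv'
        exact hno ⟨a, ha, b, hb, hab, C, hC, hne, haC, hbC, hcl, v, hv, by tauto⟩
      obtain ⟨a, ha, b, hb, hab, C, hC, hne, haC, hbC, hcl, v, hv, hvC, hva, hvb⟩ := hc'
      have hS1 : insert a (insert b C) ⊆ S := by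
        intro t ht
        simp only [Finset.mem_insert] at ht
        rcases ht with rfl | rfl | ht
        · exact ha
        · exact hb
        · exact hC ht
      have c1 : (insert a (insert b C)).card = C.card + 2 := by
        rw [Finset.card_insert_of_notMem (by simp [hab, haC]), Finset.card_insert_of_notMem hbC]
      have c2 : (S \ C).card + C.card = S.card := Finset.card_sdiff_add_card_eq_card hC
      have c3 := hne.card_pos
      have c4 : 3 ≤ (S \ C).card := by
        have : ({v, a, b} : Finset V) ⊆ S \ C := by
          intro t ht
          simp only [Finset.mem_insert, Finset.mem_singleton] at ht
          rw [Finset.mem_sdiff]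
          rcases ht with rfl | rfl | rfl
          · exact ⟨hv, hvC⟩
          · exact ⟨ha, haC⟩
          · exact ⟨hb, hbC⟩
        have h5 := Finset.card_le_card this
        rwa [Finset.card_eq_three.2 ⟨v, a, b, hva, hvb, hab, rfl⟩] at h5
      have i1 := ih _ (by omega) (insert a (insert b C)) rfl (by omega)
        (fun h => k5 (h.mono hS1)) (fun h => k33 (h.mono hS1))
      have i2 := ih _ (by omega) (S \ C) rfl c4
        (fun h => k5 (h.mono Finset.sdiff_subset)) (fun h => k33 (h.mono Finset.sdiff_subset))
      have := fw_split wa hC hcl ha hb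
      omega

theorem CS.monoG {G H : SimpleGraph V} {A : Finset V} (h : ∀ u v, G.Adj u v → H.Adj u v)
    (hA : CS G A) : CS H A :=
  ⟨hA.1, fun B hB hne hcl => hA.2 B hB hne fun u hu v hv huv => hcl u hu v hv (h u v huv)⟩

theorem HM.monoG {W : Type*} {G G' : SimpleGraph V} {S : Finset V} {H : SimpleGraph W}
    (hs : ∀ u v, G.Adj u v → G'.Adj u v) (h : HM G S H) : HM G' S H := by
  obtain ⟨f, h1, h2, h3, h4⟩ := h
  refine ⟨f, h1, fun w => (h2 w).monoG hs, h3, fun a b hab => ?_⟩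
  obtain ⟨u, hu, v, hv, e⟩ := h4 a b hab
  exact ⟨u, hu, v, hv, hs u v e⟩


theorem low_bound {V : Type*} [Fintype V] (w : V → ℕ) (X : Set V) (k : ℕ)
    (h : ∀ v ∈ X, k ≤ w v) : k * X.ncard ≤ ∑ v, w v := by
  classical
  rw [Set.ncard_eq_toFinset_card' X]
  calc k * X.toFinset.card = ∑ v ∈ X.toFinset, k := by
        rw [Finset.sum_const, smul_eq_mul, mul_comm]
    _ ≤ ∑ v ∈ X.toFinset, w v := Finset.sum_le_sum fun v hv => h v (by simpa using hv)
    _ ≤ ∑ v, w v := Finset.sum_le_sum_of_subset (Finset.subset_univ _)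

theorem mat_bound (i j k : Fin 3) :
    (![![2, 1, 2], ![1, 0, 3], ![2, 3, 0]] : Fin 3 → Fin 3 → ℕ) i j +
    (![![2, 1, 2], ![1, 0, 3], ![2, 3, 0]] : Fin 3 → Fin 3 → ℕ) i k +
    (![![2, 1, 2], ![1, 0, 3], ![2, 3, 0]] : Fin 3 → Fin 3 → ℕ) j k ≤ 6 := by
  revert i j k
  decide

theorem mat_bound2 (i j : Fin 3) :
    (![![2, 1, 2], ![1, 0, 3], ![2, 3, 0]] : Fin 3 → Fin 3 → ℕ) i j ≤ 3 := by
  revert i j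
  decide


end PlanarCert

/-- **Discharging lemma.** In a simple planar graph whose vertex set is partitioned into
terminals `T` and a stable set of non-terminals, if every vertex has degree at least 3
then some terminal has degree at most 10 and at most 5 neighbors in `T`. -/
theorem planar_low_degree_terminal {V : Type*} [Fintype V] [Nonempty V]
    (G : SimpleGraph V) (T : Set V)
    (hplanar : IsPlanar G)
    (hstable : ∀ a b, a ∉ T → b ∉ T → ¬ G.Adj a b)
    (hdeg : ∀ v : V, 3 ≤ (G.neighborSet v).ncard) :
    ∃ t ∈ T, (G.neighborSet t).ncard ≤ 10 ∧ (G.neighborSet t ∩ T).ncard ≤ 5 := by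
  classical
  by_contra hno
  have hno : ∀ t ∈ T, (G.neighborSet t ∩ T).ncard ≤ 5 → 11 ≤ (G.neighborSet t).ncard := by
    intro t ht h5
    by_contra h
    exact hno ⟨t, ht, by omega, h5⟩
  let A : V → Prop := fun t => 6 ≤ (G.neighborSet t ∩ T).ncard
  let w : V → V → ℕ := fun u v =>
    if G.Adj u v then (if u ∈ T then (if (A u ↔ v ∈ T) then 1 else 0) else 2) else 0
  let τ : V → Fin 3 := fun u => if u ∈ T then (if A u then 0 else 1) else 2
  have wa : ∀ u v, ¬ G.Adj u v → w u v = 0 := fun u v h => if_neg h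
  have pair : ∀ u v, w u v + w v u ≤
      (![![2, 1, 2], ![1, 0, 3], ![2, 3, 0]] : Fin 3 → Fin 3 → ℕ) (τ u) (τ v) := by
    intro u v
    by_cases hadj : G.Adj u v
    · have hs := hstable u v
      by_cases hu : u ∈ T <;> by_cases hv : v ∈ T <;> by_cases ha : A u <;> by_cases hb : A v <;>
        first
        | exact absurd hadj (hs hu hv)
        | simp [w, τ, hadj, hadj.symm, hu, hv, ha, hb]
    · rw [wa _ _ hadj, wa _ _ (fun h => hadj h.symm)]
      exact Nat.zero_le _
  have hlow : ∀ u, 6 ≤ ∑ v, w u v := by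
    intro u
    by_cases hu : u ∈ T
    · by_cases ha : A u
      · have := low_bound (w u) (G.neighborSet u ∩ T) 1 (by
          rintro v ⟨h1, h2⟩
          have h1 : G.Adj u v := h1
          simp [w, h1, hu, ha, h2])
        have : 6 ≤ (G.neighborSet u ∩ T).ncard := ha
        omega
      · have h5 : ¬ 6 ≤ (G.neighborSet u ∩ T).ncard := ha
        have h11 := hno u hu (by omega)
        have hsum := Set.ncard_inter_add_ncard_diff_eq_ncard (G.neighborSet u) T (Set.toFinite _)
        have := low_bound (w u) (G.neighborSet u \ T) 1 (by
          rintro v ⟨h1, h2⟩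
          have h1 : G.Adj u v := h1
          simp [w, h1, hu, ha, h2])
        omega
    · have := low_bound (w u) (G.neighborSet u) 2 (by
        intro v h1
        have h1 : G.Adj u v := h1
        simp [w, h1, hu])
      have := hdeg u
      omega
  have hcard : 3 ≤ (Finset.univ : Finset V).card := by
    obtain ⟨v⟩ := ‹Nonempty V›
    have h1 := hdeg v
    have h2 := Set.ncard_le_card (G.neighborSet v)
    rw [Nat.card_eq_fintype_card] at h2
    rw [Finset.card_univ]
    omega
  have hb := fw_bound wa (fun u v => (pair u v).trans (mat_bound2 _ _))
    (fun a b c _ _ _ => (add_le_add (add_le_add (pair a b) (pair a c)) (pair b c)).trans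
      (mat_bound _ _ _)) _ Finset.univ rfl hcard
    (fun h => hplanar.1 (HM_hasMinor h)) (fun h => hplanar.2 (HM_hasMinor h))
  have hl : 6 * (Finset.univ : Finset V).card ≤ fw w Finset.univ := by
    have := Finset.sum_le_sum (s := Finset.univ) (fun u _ => hlow u)
    rw [Finset.sum_const, smul_eq_mul] at this
    unfold fw
    omega
  omega
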